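/- arXiv:1808.00627 — 6 statements merged into one kernel-verified Lean document; each statement's English description precedes it below -/
import Mathlib

section
/- Under the block setup and outer setup, assume: (i) S_0 ≼ B_D ≼ (1+C²)·S_0 in the Loewner order for some constant C > 0; (ii) for each s ∈ {1,…,m}, ε_s ∈ (0,1], with ε_max = max_s ε_s and Σ_ε = diag(ε_1 I_{n_1},…,ε_m I_{n_m}); (iii) H_A is a real symmetric positive definite N×N matrix with β_1·A ≼ H_A^{−1} ≼ β_2·A for constants β_2 ≥ β_1 > 0. Define the saddle point matrix A_ε = [[A, Bᵀ],[B, −Σ_ε B_D − Q]] ∈ R^{(N+n)×(N+n)} and the block-diagonal preconditioner H = diag(H_A, (B_D+Q)^{−1}). Set r_max = (1+C²)·ε_max, μ̂_1 = (1−√5)/2, μ̂_2 = (1+√5)/2, μ̌_1 = ((1−r_max) − √((1−r_max)² + 4(1+r_max)))/2, α_min = min{β_1, 1}, α_max = max{β_2, 1+C²}, C_1 = μ̌_1/α_min, C_2 = μ̂_1/α_max, C_3 = 1/α_max, C_4 = μ̂_2/α_min, a = min{|C_2|, C_3}, b = max{|C_1|, C_4}. Then every eigenvalue λ of the matrix (H·A_ε)²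 is real and satisfies a² ≤ λ ≤ b². -/
open Matrix

/-- The all-ones vector `e` in `ℝ^k`. -/
noncomputable def onesV (k : ℕ) : Fin k → ℝ := fun _ => 1

/-- The rank-one block `Q_s = (1/d_s²) (M_s e_s)(M_s e_s)ᵀ`, where `d_s² = e_sᵀ M_s e_s`. -/
noncomputable def Qblk {k : ℕ} (M : Matrix (Fin k) (Fin k) ℝ) : Matrix (Fin k) (Fin k) ℝ :=
  (onesV k ⬝ᵥ M.mulVec (onesV k))⁻¹ • vecMulVec (M.mulVec (onesV k)) (M.mulVec (onesV k))

/-!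
Since `H` is positive semidefinite and `A_ε` symmetric, `H A_ε` has real spectrum, so the
eigenvalues of `(H A_ε)²` are the squares `μ²` of real `μ` with `A u + Bᵀ p = μ H_A⁻¹ u` and
`B u - (Σ_ε B_D + Q) p = μ (B_D + Q) p`. Pairing with `u` and `p` gives two energy identities.

* Lower bound, `μ > 0`: subtracting the identities removes the mixed term, and `1 ≤ μ α_max`
  follows.
* Lower bound, `μ ≤ 0`: with `x = -μ α_max`, solving the first equation for `Bᵀ p` gives
  `pᵀ S₀ p ≤ (1 + x) uᵀ (A - μ H_A⁻¹) u`, while the difference of the identities bounds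
  `uᵀ (A - μ H_A⁻¹) u` by `x pᵀ (S₀ + Q) p - pᵀ Q p`; together `1 ≤ x² + x`, so `x ≥ |μ̂₁|`.
* Upper bound: adding the identities leaves the mixed term `2 pᵀ B u`, which Young's inequality
  for the pair `(A, S₀)` splits; the best weights are the golden ratio for `μ > 0` and `μ̌₁` for
  `μ < 0`.
-/

open scoped MatrixOrder goldenRatio

section Spectrum

variable {ι K L : Type*} [Fintype ι] [DecidableEq ι] [Field K] [Field L] [Algebra K L]

lemma mem_spectrum_iff_exists_mulVec_eq_smul {T : Matrix ι ι K} {μ : K} :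
    μ ∈ spectrum K T ↔ ∃ v ≠ 0, T *ᵥ v = μ • v := by
  rw [← spectrum_toLin', ← Module.End.hasEigenvalue_iff_mem_spectrum]
  constructor
  · intro h
    obtain ⟨v, hv⟩ := h.exists_hasEigenvector
    exact ⟨v, hv.2, hv.apply_eq_smul⟩
  · rintro ⟨v, hv, hTv⟩
    exact Module.End.hasEigenvalue_of_hasEigenvector
      (Module.End.hasEigenvector_iff.2 ⟨Module.End.mem_eigenspace_iff.2 hTv, hv⟩)

lemma exists_mem_spectrum_of_mem_spectrum_map {T : Matrix ι ι K} (hT : T.charpoly.Splits) {μ : L}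
    (hμ : μ ∈ spectrum L (T.map (algebraMap K L))) : ∃ ν ∈ spectrum K T, algebraMap K L ν = μ := by
  rw [mem_spectrum_iff_isRoot_charpoly, charpoly_map] at hμ
  obtain ⟨ν, rfl⟩ := hT.mem_range_of_isRoot T.charpoly_monic.ne_zero hμ
  refine ⟨ν, mem_spectrum_iff_isRoot_charpoly.2 ?_, rfl⟩
  exact hμ.of_map (algebraMap K L).injective

lemma exists_eigenvector_of_pow_map [IsAlgClosed L] {T : Matrix ι ι K} (hT : T.charpoly.Splits)
    {k : ℕ} (hk : 0 < k) {lam : L} {x : ι → L} (hx : x ≠ 0)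
    (hTx : (T ^ k).map (algebraMap K L) *ᵥ x = lam • x) :
    ∃ μ : K, ∃ v ≠ 0, T *ᵥ v = μ • v ∧ algebraMap K L μ ^ k = lam := by
  have hlam : lam ∈ spectrum L (T.map (algebraMap K L) ^ k) := by
    rw [← Matrix.map_pow]
    exact mem_spectrum_iff_exists_mulVec_eq_smul.2 ⟨x, hx, hTx⟩
  rw [spectrum.map_pow_of_pos _ hk] at hlam
  obtain ⟨ν, hν, hνlam⟩ := hlam
  obtain ⟨μ, hμ, rfl⟩ := exists_mem_spectrum_of_mem_spectrum_map hT hν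
  obtain ⟨v, hv, hTv⟩ := mem_spectrum_iff_exists_mulVec_eq_smul.1 hμ
  exact ⟨μ, v, hv, hTv, hνlam⟩

open scoped ComplexOrder in
lemma splits_charpoly_mul_of_posSemidef {𝕜 : Type*} [RCLike 𝕜] {X Y : Matrix ι ι 𝕜}
    (hX : X.PosSemidef) (hY : Y.IsHermitian) : (X * Y).charpoly.Splits := by
  -- `X * Y` has the characteristic polynomial of the Hermitian matrix `√X * Y * √X`.
  have hsqrt : (CFC.sqrt X).IsHermitian := (CFC.sqrt_nonneg X).posSemidef.isHermitian
  have hXY : X * Y = CFC.sqrt X * (CFC.sqrt X * Y) := by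
    rw [← Matrix.mul_assoc, CFC.sqrt_mul_sqrt_self X hX.nonneg]
  rw [hXY, charpoly_mul_comm]
  refine IsHermitian.splits_charpoly ?_
  simpa only [hsqrt.eq] using isHermitian_mul_mul_conjTranspose (CFC.sqrt X) hY

end Spectrum

section QuadraticForms

variable {ι κ : Type*} [Fintype ι] [Fintype κ]

lemma dotProduct_mulVec_comm {X : Matrix ι ι ℝ} (hX : X.IsHermitian) (v w : ι → ℝ) :
    v ⬝ᵥ X *ᵥ w = w ⬝ᵥ X *ᵥ v := by
  rw [dotProduct_mulVec, ← mulVec_transpose, ← conjTranspose_eq_transpose_of_trivial, hX.eq,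
    dotProduct_comm]

lemma dotProduct_mulVec_add_smul {X : Matrix ι ι ℝ} (hX : X.IsHermitian) (v w : ι → ℝ) (k : ℝ) :
    (v + k • w) ⬝ᵥ X *ᵥ (v + k • w)
      = v ⬝ᵥ X *ᵥ v + 2 * k * (v ⬝ᵥ X *ᵥ w) + k ^ 2 * (w ⬝ᵥ X *ᵥ w) := by
  simp only [mulVec_add, mulVec_smul, add_dotProduct, dotProduct_add, smul_dotProduct,
    dotProduct_smul, smul_eq_mul, dotProduct_mulVec_comm hX w v]
  ring

lemma dotProduct_mulVec_self_nonneg {X : Matrix ι ι ℝ} (hX : X.PosSemidef) (v : ι → ℝ) :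
    0 ≤ v ⬝ᵥ X *ᵥ v :=
  hX.dotProduct_mulVec_nonneg v

lemma dotProduct_mulVec_self_le_of_le {X Y : Matrix ι ι ℝ} (h : X ≤ Y) (v : ι → ℝ) :
    v ⬝ᵥ X *ᵥ v ≤ v ⬝ᵥ Y *ᵥ v := by
  have := dotProduct_mulVec_self_nonneg (le_iff.1 h) v
  rwa [sub_mulVec, dotProduct_sub, sub_nonneg] at this

lemma dotProduct_mulVec_self_le_mul_of_le_smul {X Y : Matrix ι ι ℝ} {α : ℝ} (h : X ≤ α • Y)
    (v : ι → ℝ) : v ⬝ᵥ X *ᵥ v ≤ α * (v ⬝ᵥ Y *ᵥ v) := by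
  simpa only [smul_mulVec, dotProduct_smul, smul_eq_mul] using dotProduct_mulVec_self_le_of_le h v

lemma mul_dotProduct_mulVec_self_le_of_smul_le {X Y : Matrix ι ι ℝ} {α : ℝ} (h : α • X ≤ Y)
    (v : ι → ℝ) : α * (v ⬝ᵥ X *ᵥ v) ≤ v ⬝ᵥ Y *ᵥ v := by
  simpa only [smul_mulVec, dotProduct_smul, smul_eq_mul] using dotProduct_mulVec_self_le_of_le h v

variable [DecidableEq ι] {A : Matrix ι ι ℝ}

lemma mulVec_inv_mulVec (hA : IsUnit A) (w : ι → ℝ) : A *ᵥ A⁻¹ *ᵥ w = w := by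
  rw [mulVec_mulVec, mul_nonsing_inv _ ((isUnit_iff_isUnit_det A).1 hA), one_mulVec]

lemma eq_inv_mulVec_of_mulVec_eq (hA : IsUnit A) {v w : ι → ℝ} (h : A *ᵥ v = w) :
    v = A⁻¹ *ᵥ w := by
  rw [← h, mulVec_mulVec, nonsing_inv_mul _ ((isUnit_iff_isUnit_det A).1 hA), one_mulVec]

lemma dotProduct_mulVec_schur (B : Matrix κ ι ℝ) (p : κ → ℝ) :
    p ⬝ᵥ (B * A⁻¹ * Bᵀ) *ᵥ p = (Bᵀ *ᵥ p) ⬝ᵥ A⁻¹ *ᵥ (Bᵀ *ᵥ p) := by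
  rw [← mulVec_mulVec, ← mulVec_mulVec, ← dotProduct_transpose_mulVec, dotProduct_comm]

lemma posSemidef_schur {ρ : Type*} [Finite ρ] (hA : A.PosSemidef) (B : Matrix ρ ι ℝ) :
    (B * A⁻¹ * Bᵀ).PosSemidef :=
  hA.inv.mul_mul_conjTranspose_same B

lemma young_inequality_mulVec (hA : A.PosDef) (B : Matrix κ ι ℝ) (u : ι → ℝ) (p : κ → ℝ) (k : ℝ) :
    0 ≤ u ⬝ᵥ A *ᵥ u + 2 * k * (p ⬝ᵥ B *ᵥ u) + k ^ 2 * (p ⬝ᵥ (B * A⁻¹ * Bᵀ) *ᵥ p) := by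
  have h := dotProduct_mulVec_self_nonneg hA.posSemidef (u + k • A⁻¹ *ᵥ Bᵀ *ᵥ p)
  rwa [dotProduct_mulVec_add_smul hA.isHermitian, mulVec_inv_mulVec hA.isUnit,
    dotProduct_transpose_mulVec, dotProduct_comm (A⁻¹ *ᵥ _), ← dotProduct_mulVec_schur] at h

lemma dotProduct_inv_mulVec_le {X : Matrix ι ι ℝ} (hA : A.PosDef) (hX : X.PosSemidef) {γ : ℝ}
    (hγ : 0 < γ) (hXA : X ≤ γ • A) (u : ι → ℝ) :
    (X *ᵥ u) ⬝ᵥ A⁻¹ *ᵥ (X *ᵥ u) ≤ γ * (u ⬝ᵥ X *ᵥ u) := by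
  set z := A⁻¹ *ᵥ X *ᵥ u with hz
  have hzX : z ⬝ᵥ X *ᵥ z ≤ γ * ((X *ᵥ u) ⬝ᵥ z) := by
    have := dotProduct_mulVec_self_le_mul_of_le_smul hXA z
    rwa [hz, mulVec_inv_mulVec hA.isUnit, ← hz, dotProduct_comm z (X *ᵥ u)] at this
  have hsq := dotProduct_mulVec_self_nonneg hX (z + (-γ) • u)
  rw [dotProduct_mulVec_add_smul hX.isHermitian, dotProduct_comm z (X *ᵥ u)] at hsq
  refine le_of_mul_le_mul_left ?_ hγ
  linarith

end QuadraticForms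

section ScalarBounds

/-- The smaller root `μ̌₁` of `μ² = (1 - r) μ + (1 + r)`, which bounds the negative eigenvalues of
the preconditioned saddle point matrix from below. -/
noncomputable def lowerRoot (r : ℝ) : ℝ := ((1 - r) - √((1 - r) ^ 2 + 4 * (1 + r))) / 2

lemma lowerRoot_sq (r : ℝ) : lowerRoot r ^ 2 = (1 - r) * lowerRoot r + (1 + r) := by
  have hD : √((1 - r) ^ 2 + 4 * (1 + r)) ^ 2 = (1 - r) ^ 2 + 4 * (1 + r) :=
    Real.sq_sqrt (by nlinarith [sq_nonneg (r + 1)])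
  rw [lowerRoot]
  linear_combination hD / 4

lemma lowerRoot_lt_one (r : ℝ) : lowerRoot r < 1 := by
  have hD : -1 - r < √((1 - r) ^ 2 + 4 * (1 + r)) :=
    Real.lt_sqrt_of_sq_lt (by linarith)
  rw [lowerRoot]
  linarith

lemma neg_goldenConj_le_of_one_le_sq_add {x : ℝ} (hx : 0 ≤ x) (h : 1 ≤ x ^ 2 + x) : -ψ ≤ x := by
  nlinarith [Real.goldenConj_sq, Real.goldenConj_neg]

lemma min_abs_div_sq_le_sq {α μ x y : ℝ} (hα : 0 < α) (hx : x ≤ 0) (hy : 0 ≤ y)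
    (h : -x ≤ |μ| * α) : min |x / α| (y / α) ^ 2 ≤ μ ^ 2 := by
  have hxμ : |x / α| ≤ |μ| := by
    rwa [abs_div, abs_of_nonpos hx, abs_of_pos hα, div_le_iff₀ hα]
  rw [← sq_abs μ]
  exact pow_le_pow_left₀ (le_min (abs_nonneg _) (div_nonneg hy hα.le))
    ((min_le_left _ _).trans hxμ) 2

lemma sq_le_max_abs_div_sq {α μ x y : ℝ} (hα : 0 < α) (h : |μ| * α ≤ max (-x) y) :
    μ ^ 2 ≤ max |x / α| (y / α) ^ 2 := by
  have hx : -x / α ≤ |x / α| := by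
    rw [neg_div]
    exact neg_le_abs _
  rw [← sq_abs μ]
  refine pow_le_pow_left₀ (abs_nonneg μ) ?_ 2
  calc |μ| ≤ max (-x) y / α := (le_div_iff₀ hα).2 h
    _ = max (-x / α) (y / α) := (max_div_div_right hα.le _ _).symm
    _ ≤ max |x / α| (y / α) := max_le_max_right _ hx

end ScalarBounds

/-- A generalised eigenpair of the saddle point pencil: `(u, p) ≠ 0` and
`[[A, Bᵀ], [B, -F]] (u, p) = μ diag(G, W) (u, p)`, written blockwise. -/
structure IsSaddleEigenpair {ι κ : Type*} [Fintype ι] [Fintype κ] (A G : Matrix ι ι ℝ)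
    (B : Matrix κ ι ℝ) (F W : Matrix κ κ ℝ) (μ : ℝ) (u : ι → ℝ) (p : κ → ℝ) : Prop where
  ne_zero : u ≠ 0 ∨ p ≠ 0
  mulVec_fst : A *ᵥ u + Bᵀ *ᵥ p = μ • G *ᵥ u
  mulVec_snd : B *ᵥ u - F *ᵥ p = μ • W *ᵥ p

namespace IsSaddleEigenpair

variable {ι κ : Type*} [Fintype ι] [Fintype κ] {A G : Matrix ι ι ℝ} {B : Matrix κ ι ℝ}
  {F Q W : Matrix κ κ ℝ} {μ α : ℝ} {u : ι → ℝ} {p : κ → ℝ}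

lemma energy_fst (h : IsSaddleEigenpair A G B F W μ u p) :
    u ⬝ᵥ A *ᵥ u + p ⬝ᵥ B *ᵥ u = μ * (u ⬝ᵥ G *ᵥ u) := by
  simpa only [dotProduct_add, dotProduct_transpose_mulVec, dotProduct_smul, smul_eq_mul]
    using congrArg (u ⬝ᵥ ·) h.mulVec_fst

lemma energy_snd (h : IsSaddleEigenpair A G B F W μ u p) :
    p ⬝ᵥ B *ᵥ u - p ⬝ᵥ F *ᵥ p = μ * (p ⬝ᵥ W *ᵥ p) := by
  simpa only [dotProduct_sub, dotProduct_smul, smul_eq_mul]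
    using congrArg (p ⬝ᵥ ·) h.mulVec_snd

lemma energy_pos (h : IsSaddleEigenpair A G B F W μ u p) {X : Matrix ι ι ℝ} {Y : Matrix κ κ ℝ}
    (hX : X.PosDef) (hY : Y.PosDef) : 0 < u ⬝ᵥ X *ᵥ u + p ⬝ᵥ Y *ᵥ p := by
  rcases h.ne_zero with hu | hp
  · exact add_pos_of_pos_of_nonneg (hX.dotProduct_mulVec_pos hu)
      (dotProduct_mulVec_self_nonneg hY.posSemidef p)
  · exact add_pos_of_nonneg_of_pos (dotProduct_mulVec_self_nonneg hX.posSemidef u)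
      (hY.dotProduct_mulVec_pos hp)

lemma one_le_mul_of_pos (h : IsSaddleEigenpair A G B F W μ u p) (hμ : 0 < μ) (hA : A.PosDef)
    (hW : W.PosDef) (hF : F.PosSemidef) (hGA : G ≤ α • A) : 1 ≤ μ * α := by
  have hE := h.energy_pos hA hW
  have hU := dotProduct_mulVec_self_nonneg hA.posSemidef u
  have hw := dotProduct_mulVec_self_nonneg hW.posSemidef p
  have hf := dotProduct_mulVec_self_nonneg hF p
  have hbal : u ⬝ᵥ A *ᵥ u + p ⬝ᵥ F *ᵥ p + μ * (p ⬝ᵥ W *ᵥ p) ≤ μ * α * (u ⬝ᵥ A *ᵥ u) := by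
    have := mul_le_mul_of_nonneg_left (dotProduct_mulVec_self_le_mul_of_le_smul hGA u) hμ.le
    linarith [h.energy_fst, h.energy_snd]
  have hμw := mul_nonneg hμ.le hw
  by_contra! hlt
  have hU0 : u ⬝ᵥ A *ᵥ u = 0 := by nlinarith
  rw [hU0] at hE hbal
  linarith [mul_pos hμ hE]

variable [DecidableEq ι]

lemma schur_le_of_nonpos (h : IsSaddleEigenpair A G B F W μ u p) (hμ : μ ≤ 0) (hA : A.PosDef)
    (hG : G.PosSemidef) (hα : 0 ≤ α) (hGA : G ≤ α • A) :
    p ⬝ᵥ (B * A⁻¹ * Bᵀ) *ᵥ p ≤ (1 - μ * α) * (u ⬝ᵥ A *ᵥ u - μ * (u ⬝ᵥ G *ᵥ u)) := by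
  have hμ' : 0 ≤ -μ := neg_nonneg.2 hμ
  have hBp : Bᵀ *ᵥ p = -((A + (-μ) • G) *ᵥ u) := by
    rw [add_mulVec, smul_mulVec, neg_smul, ← h.mulVec_fst]
    abel
  have hle : A + (-μ) • G ≤ (1 - μ * α) • A := by
    have := add_le_add_right (smul_le_smul_of_nonneg_left hGA hμ') A
    convert this using 1
    module
  have := dotProduct_inv_mulVec_le hA (hA.posSemidef.add (hG.smul hμ'))
    (by nlinarith : 0 < 1 - μ * α) hle u
  rw [dotProduct_mulVec_schur, hBp, mulVec_neg, neg_dotProduct_neg]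
  convert this using 2
  simp only [add_mulVec, smul_mulVec, dotProduct_add, dotProduct_smul, smul_eq_mul]
  ring

lemma one_le_sq_add_of_nonpos (h : IsSaddleEigenpair A G B F W μ u p) (hμ : μ ≤ 0)
    (hA : A.PosDef) (hG : G.PosSemidef) (hW : W.PosDef) (hQ : Q.PosSemidef) (hQF : Q ≤ F)
    (hα : 0 ≤ α) (hGA : G ≤ α • A) (hWS : W ≤ α • (B * A⁻¹ * Bᵀ + Q)) :
    1 ≤ (-μ * α) ^ 2 + -μ * α := by
  have hμ' : 0 ≤ -μ := neg_nonneg.2 hμ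
  have hs := dotProduct_mulVec_self_nonneg (posSemidef_schur hA.posSemidef B) p
  have hq := dotProduct_mulVec_self_nonneg hQ p
  have hqf := dotProduct_mulVec_self_le_of_le hQF p
  have hg := mul_nonneg hμ' (dotProduct_mulVec_self_nonneg hG u)
  have hU := dotProduct_mulVec_self_nonneg hA.posSemidef u
  have hw := dotProduct_mulVec_self_le_mul_of_le_smul hWS p
  rw [add_mulVec, dotProduct_add] at hw
  have hE := h.energy_pos hA hW
  have hschur := h.schur_le_of_nonpos hμ hA hG hα hGA
  set s := p ⬝ᵥ (B * A⁻¹ * Bᵀ) *ᵥ p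
  set q := p ⬝ᵥ Q *ᵥ p
  set x := -μ * α with hx
  have hx0 : 0 ≤ x := mul_nonneg hμ' hα
  have hbal : u ⬝ᵥ A *ᵥ u - μ * (u ⬝ᵥ G *ᵥ u) ≤ x * (s + q) - q := by
    have := mul_le_mul_of_nonneg_left hw hμ'
    linarith [h.energy_fst, h.energy_snd]
  have hsq : s * (1 - x - x ^ 2) + q * (1 - x ^ 2) ≤ 0 := by
    have := mul_le_mul_of_nonneg_left hbal (by linarith : 0 ≤ 1 + x)
    linarith
  by_contra! hlt
  have hx1 : 0 < 1 - x ^ 2 := by linarith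
  have hs0 : s = 0 := by nlinarith
  have hq0 : q = 0 := by nlinarith
  rw [hs0, hq0] at hw hbal
  linarith

lemma mul_le_of_mul_energy_le (h : IsSaddleEigenpair A G B F W μ u p) (hG : G.PosDef)
    (hW : W.PosDef) (hα : 0 ≤ α) (hAG : α • A ≤ G) (hSW : α • (B * A⁻¹ * Bᵀ + Q) ≤ W) {ν b : ℝ}
    (hb : 0 ≤ b) (hν : ν * (u ⬝ᵥ G *ᵥ u + p ⬝ᵥ W *ᵥ p)
      ≤ b * (u ⬝ᵥ A *ᵥ u + p ⬝ᵥ (B * A⁻¹ * Bᵀ + Q) *ᵥ p)) : ν * α ≤ b := by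
  have hscale : α * (u ⬝ᵥ A *ᵥ u + p ⬝ᵥ (B * A⁻¹ * Bᵀ + Q) *ᵥ p)
      ≤ u ⬝ᵥ G *ᵥ u + p ⬝ᵥ W *ᵥ p := by
    rw [mul_add]
    exact add_le_add (mul_dotProduct_mulVec_self_le_of_smul_le hAG u)
      (mul_dotProduct_mulVec_self_le_of_smul_le hSW p)
  refine le_of_mul_le_mul_right ?_ (h.energy_pos hG hW)
  have h1 := mul_le_mul_of_nonneg_left hν hα
  have h2 := mul_le_mul_of_nonneg_left hscale hb
  linarith

lemma mul_le_goldenRatio (h : IsSaddleEigenpair A G B F W μ u p) (hA : A.PosDef) (hG : G.PosDef)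
    (hW : W.PosDef) (hF : F.PosSemidef) (hQ : Q.PosSemidef) (hα : 0 ≤ α) (hAG : α • A ≤ G)
    (hSW : α • (B * A⁻¹ * Bᵀ + Q) ≤ W) : μ * α ≤ φ := by
  refine h.mul_le_of_mul_energy_le hG hW hα hAG hSW Real.goldenRatio_pos.le ?_
  have hf := dotProduct_mulVec_self_nonneg hF p
  have hq := mul_nonneg Real.goldenRatio_pos.le (dotProduct_mulVec_self_nonneg hQ p)
  have hc : 2 * (p ⬝ᵥ B *ᵥ u)
      ≤ (φ - 1) * (u ⬝ᵥ A *ᵥ u) + φ * (p ⬝ᵥ (B * A⁻¹ * Bᵀ) *ᵥ p) := by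
    have hφ : (φ - 1) * φ = 1 := by linear_combination Real.goldenRatio_sq
    have := mul_nonneg (sub_nonneg.2 Real.one_lt_goldenRatio.le)
      (young_inequality_mulVec hA B u p (-φ))
    linear_combination this +
      (φ * (p ⬝ᵥ (B * A⁻¹ * Bᵀ) *ᵥ p) - 2 * (p ⬝ᵥ B *ᵥ u)) * hφ
  rw [mul_add, ← h.energy_fst, ← h.energy_snd, add_mulVec, dotProduct_add]
  linarith

lemma neg_mul_le_max (h : IsSaddleEigenpair A G B F W μ u p) {r : ℝ} (hA : A.PosDef)
    (hG : G.PosDef) (hW : W.PosDef) (hQ : Q.PosSemidef) (hα : 0 ≤ α) (hAG : α • A ≤ G)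
    (hSW : α • (B * A⁻¹ * Bᵀ + Q) ≤ W) (hFr : F ≤ r • (B * A⁻¹ * Bᵀ) + Q) :
    -μ * α ≤ max (-lowerRoot r) 1 := by
  refine h.mul_le_of_mul_energy_le hG hW hα hAG hSW (zero_le_one.trans (le_max_right _ _)) ?_
  have hs := dotProduct_mulVec_self_nonneg (posSemidef_schur hA.posSemidef B) p
  have hf := dotProduct_mulVec_self_le_of_le hFr p
  rw [add_mulVec, dotProduct_add, smul_mulVec, dotProduct_smul, smul_eq_mul] at hf
  have hc : -(u ⬝ᵥ A *ᵥ u) - 2 * (p ⬝ᵥ B *ᵥ u)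
      ≤ -lowerRoot r * (u ⬝ᵥ A *ᵥ u) + (-lowerRoot r - r) * (p ⬝ᵥ (B * A⁻¹ * Bᵀ) *ᵥ p) := by
    have hr : (1 - lowerRoot r) * (-lowerRoot r - r) = 1 := by
      linear_combination lowerRoot_sq r
    have := mul_nonneg (sub_nonneg.2 (lowerRoot_lt_one r).le)
      (young_inequality_mulVec hA B u p (-lowerRoot r - r))
    linear_combination this + (2 * (p ⬝ᵥ B *ᵥ u)
      + (-lowerRoot r - r) * (p ⬝ᵥ (B * A⁻¹ * Bᵀ) *ᵥ p)) * hr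
  have hU' := mul_le_mul_of_nonneg_right (le_max_left (-lowerRoot r) 1)
    (add_nonneg (dotProduct_mulVec_self_nonneg hA.posSemidef u) hs)
  have hq' := mul_le_mul_of_nonneg_right (le_max_right (-lowerRoot r) 1)
    (dotProduct_mulVec_self_nonneg hQ p)
  have hsum : -μ * (u ⬝ᵥ G *ᵥ u + p ⬝ᵥ W *ᵥ p)
      = -(u ⬝ᵥ A *ᵥ u) - 2 * (p ⬝ᵥ B *ᵥ u) + p ⬝ᵥ F *ᵥ p := by
    linear_combination h.energy_fst + h.energy_snd
  rw [hsum, add_mulVec, dotProduct_add]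
  linarith

lemma neg_goldenConj_le_abs_mul (h : IsSaddleEigenpair A G B F W μ u p) (hA : A.PosDef)
    (hG : G.PosSemidef) (hW : W.PosDef) (hQ : Q.PosSemidef) (hQF : Q ≤ F) (hα : 0 ≤ α)
    (hGA : G ≤ α • A) (hWS : W ≤ α • (B * A⁻¹ * Bᵀ + Q)) : -ψ ≤ |μ| * α := by
  rcases lt_or_ge 0 μ with hμ | hμ
  · have hF : F.PosSemidef := (hQ.nonneg.trans hQF).posSemidef
    rw [abs_of_pos hμ]
    linarith [h.one_le_mul_of_pos hμ hA hW hF hGA, Real.neg_one_lt_goldenConj]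
  · rw [abs_of_nonpos hμ]
    exact neg_goldenConj_le_of_one_le_sq_add (mul_nonneg (neg_nonneg.2 hμ) hα)
      (h.one_le_sq_add_of_nonpos hμ hA hG hW hQ hQF hα hGA hWS)

lemma abs_mul_le (h : IsSaddleEigenpair A G B F W μ u p) {r : ℝ} (hA : A.PosDef)
    (hG : G.PosDef) (hW : W.PosDef) (hQ : Q.PosSemidef) (hQF : Q ≤ F)
    (hFr : F ≤ r • (B * A⁻¹ * Bᵀ) + Q) (hα : 0 ≤ α) (hAG : α • A ≤ G)
    (hSW : α • (B * A⁻¹ * Bᵀ + Q) ≤ W) : |μ| * α ≤ max (-lowerRoot r) φ := by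
  have hF : F.PosSemidef := (hQ.nonneg.trans hQF).posSemidef
  have hpos : μ * α ≤ φ := h.mul_le_goldenRatio hA hG hW hF hQ hα hAG hSW
  have hneg : -μ * α ≤ max (-lowerRoot r) 1 := h.neg_mul_le_max hA hG hW hQ hα hAG hSW hFr
  rcases abs_cases μ with ⟨hμ, -⟩ | ⟨hμ, -⟩ <;> rw [hμ]
  · exact hpos.trans (le_max_right _ _)
  · exact hneg.trans (max_le_max_left _ Real.one_lt_goldenRatio.le)

end IsSaddleEigenpair

section Preconditioner

variable {ι κ : Type*}

lemma posSemidef_fromBlocks_zero [Finite ι] [Finite κ] {R : Type*} [Ring R] [PartialOrder R]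
    [StarRing R] [AddLeftMono R] {X : Matrix ι ι R} {Y : Matrix κ κ R} (hX : X.PosSemidef)
    (hY : Y.PosSemidef) : (fromBlocks X 0 0 Y).PosSemidef := by
  cases nonempty_fintype ι
  cases nonempty_fintype κ
  refine .of_dotProduct_mulVec_nonneg
    (hX.isHermitian.fromBlocks conjTranspose_zero hY.isHermitian) fun v => ?_
  obtain ⟨u, p, rfl⟩ : ∃ u p, v = Sum.elim u p := ⟨_, _, (Sum.elim_comp_inl_inr v).symm⟩
  have hquad : star (Sum.elim u p) ⬝ᵥ fromBlocks X 0 0 Y *ᵥ Sum.elim u p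
      = star u ⬝ᵥ X *ᵥ u + star p ⬝ᵥ Y *ᵥ p := by
    simp [fromBlocks_mulVec, dotProduct]
  rw [hquad]
  exact add_nonneg (hX.dotProduct_mulVec_nonneg u) (hY.dotProduct_mulVec_nonneg p)

variable [Fintype ι] [Fintype κ] [DecidableEq ι] [DecidableEq κ]

lemma isSaddleEigenpair_of_mulVec_eq_smul {A HA : Matrix ι ι ℝ} {B : Matrix κ ι ℝ}
    {F W : Matrix κ κ ℝ} (hHA : IsUnit HA) (hW : IsUnit W) {μ : ℝ} {v : ι ⊕ κ → ℝ} (hv : v ≠ 0)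
    (h : (fromBlocks HA 0 0 W⁻¹ * fromBlocks A Bᵀ B (-F)) *ᵥ v = μ • v) :
    IsSaddleEigenpair A HA⁻¹ B F W μ (v ∘ Sum.inl) (v ∘ Sum.inr) where
  ne_zero := by
    contrapose! hv
    rw [← Sum.elim_comp_inl_inr v, hv.1, hv.2, Sum.elim_zero_zero]
  mulVec_fst := by
    rw [← mulVec_smul]
    refine eq_inv_mulVec_of_mulVec_eq hHA ?_
    simpa [← mulVec_mulVec, fromBlocks_mulVec, Pi.smul_comp] using congrArg (· ∘ Sum.inl) h
  mulVec_snd := by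
    have hsnd : W⁻¹ *ᵥ (B *ᵥ (v ∘ Sum.inl) - F *ᵥ (v ∘ Sum.inr)) = μ • (v ∘ Sum.inr) := by
      simpa [← mulVec_mulVec, fromBlocks_mulVec, Pi.smul_comp, neg_mulVec, ← sub_eq_add_neg]
        using congrArg (· ∘ Sum.inr) h
    rw [← mulVec_smul, ← hsnd, mulVec_inv_mulVec hW]

end Preconditioner

section BlockDiagonal

variable {o : Type*} {n : o → Type*} [DecidableEq o]

lemma dotProduct_blockDiagonal'_mulVec [Fintype o] [∀ s, Fintype (n s)] {R : Type*}
    [NonUnitalNonAssocSemiring R] (X : ∀ s, Matrix (n s) (n s) R) (v w : (Σ s, n s) → R) :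
    v ⬝ᵥ blockDiagonal' X *ᵥ w
      = ∑ s, (fun i => v ⟨s, i⟩) ⬝ᵥ X s *ᵥ (fun i => w ⟨s, i⟩) := by
  simp only [dotProduct, mulVec, Fintype.sum_sigma]
  refine Finset.sum_congr rfl fun s _ => Finset.sum_congr rfl fun i _ => ?_
  rw [Finset.sum_eq_single s (fun t _ hts => ?_) (fun hs => absurd (Finset.mem_univ s) hs)]
  · simp only [blockDiagonal'_apply_eq]
  · simp only [blockDiagonal'_apply_ne _ _ _ hts.symm, zero_mul, Finset.sum_const_zero]

lemma blockDiagonal'_smul_one_mul [Fintype o] [∀ s, Fintype (n s)] [∀ s, DecidableEq (n s)]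
    {R : Type*} [Semiring R] (c : o → R) (X : ∀ s, Matrix (n s) (n s) R) :
    blockDiagonal' (fun s => c s • (1 : Matrix (n s) (n s) R)) * blockDiagonal' X
      = blockDiagonal' fun s => c s • X s := by
  rw [← blockDiagonal'_mul]
  simp only [smul_mul, Matrix.one_mul]

variable [Finite o] [∀ s, Finite (n s)]

lemma posSemidef_blockDiagonal' {R : Type*} [Ring R] [PartialOrder R] [StarRing R]
    [AddLeftMono R] {X : ∀ s, Matrix (n s) (n s) R} (hX : ∀ s, (X s).PosSemidef) :
    (blockDiagonal' X).PosSemidef := by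
  cases nonempty_fintype o
  have := fun s => Fintype.ofFinite (n s)
  refine .of_dotProduct_mulVec_nonneg
    (isHermitian_blockDiagonal'_iff.2 fun s => (hX s).isHermitian) fun v => ?_
  rw [dotProduct_blockDiagonal'_mulVec]
  exact Finset.sum_nonneg fun s _ => (hX s).dotProduct_mulVec_nonneg _

lemma posDef_blockDiagonal' {R : Type*} [Ring R] [PartialOrder R] [StarRing R]
    [IsOrderedCancelAddMonoid R] {X : ∀ s, Matrix (n s) (n s) R} (hX : ∀ s, (X s).PosDef) :
    (blockDiagonal' X).PosDef := by
  cases nonempty_fintype o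
  have := fun s => Fintype.ofFinite (n s)
  refine .of_dotProduct_mulVec_pos
    (isHermitian_blockDiagonal'_iff.2 fun s => (hX s).isHermitian) fun v hv => ?_
  rw [dotProduct_blockDiagonal'_mulVec]
  obtain ⟨⟨s, i⟩, hi⟩ := Function.ne_iff.1 hv
  exact Finset.sum_pos' (fun t _ => (hX t).posSemidef.dotProduct_mulVec_nonneg _)
    ⟨s, Finset.mem_univ s, (hX s).dotProduct_mulVec_pos fun h => hi (congrFun h i)⟩

lemma blockDiagonal'_smul_le {X : ∀ s, Matrix (n s) (n s) ℝ} (hX : ∀ s, (X s).PosSemidef)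
    {c : o → ℝ} {e : ℝ} (hc : ∀ s, c s ≤ e) :
    blockDiagonal' (fun s => c s • X s) ≤ e • blockDiagonal' X := by
  rw [le_iff, ← blockDiagonal'_smul, ← blockDiagonal'_sub]
  refine posSemidef_blockDiagonal' fun s => ?_
  rw [Pi.sub_apply, Pi.smul_apply, ← sub_smul]
  exact (hX s).smul (sub_nonneg.2 (hc s))

end BlockDiagonal

section RankOneCorrection

lemma posDef_add_of_ker_disjoint {ι : Type*} [Fintype ι] {X Y : Matrix ι ι ℝ}
    (hX : X.PosSemidef) (hY : Y.PosSemidef) (h : ∀ v, X *ᵥ v = 0 → Y *ᵥ v = 0 → v = 0) :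
    (X + Y).PosDef := by
  refine .of_dotProduct_mulVec_pos (hX.isHermitian.add hY.isHermitian) fun v hv => ?_
  rw [add_mulVec, dotProduct_add]
  refine (add_nonneg (hX.dotProduct_mulVec_nonneg v) (hY.dotProduct_mulVec_nonneg v)).lt_of_ne' ?_
  intro h0
  rw [add_eq_zero_iff_of_nonneg (hX.dotProduct_mulVec_nonneg v) (hY.dotProduct_mulVec_nonneg v),
    hX.dotProduct_mulVec_zero_iff, hY.dotProduct_mulVec_zero_iff] at h0
  exact hv (h v h0.1 h0.2)

variable {k : ℕ} {M : Matrix (Fin k) (Fin k) ℝ}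

lemma posSemidef_Qblk (hM : M.PosSemidef) : (Qblk M).PosSemidef := by
  have hrank := posSemidef_vecMulVec_self_star (M *ᵥ onesV k)
  rw [star_trivial] at hrank
  exact hrank.smul (inv_nonneg.2 (dotProduct_mulVec_self_nonneg hM (onesV k)))

lemma Qblk_mulVec_onesV (hM : M.PosSemidef) : Qblk M *ᵥ onesV k = M *ᵥ onesV k := by
  rw [Qblk, smul_mulVec, vecMulVec_mulVec, op_smul_eq_smul, smul_smul,
    dotProduct_comm (M *ᵥ onesV k)]
  by_cases hd : onesV k ⬝ᵥ M *ᵥ onesV k = 0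
  · rw [(hM.dotProduct_mulVec_zero_iff (onesV k)).1 hd, smul_zero]
  · rw [inv_mul_cancel₀ hd, one_smul]

lemma posDef_add_Qblk {X : Matrix (Fin k) (Fin k) ℝ} (hX : X.PosSemidef)
    (hker : LinearMap.ker X.mulVecLin = Submodule.span ℝ {onesV k}) (hM : M.PosDef) :
    (X + Qblk M).PosDef := by
  refine posDef_add_of_ker_disjoint hX (posSemidef_Qblk hM.posSemidef) fun v hXv hQv => ?_
  have hv : v ∈ Submodule.span ℝ {onesV k} := hker ▸ hXv
  obtain ⟨c, rfl⟩ := Submodule.mem_span_singleton.1 hv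
  rw [mulVec_smul, Qblk_mulVec_onesV hM.posSemidef, ← mulVec_smul] at hQv
  exact (eq_inv_mulVec_of_mulVec_eq hM.isUnit hQv).trans (mulVec_zero _)

lemma posDef_blockDiagonal'_add_Qblk {o : Type*} [Finite o] [DecidableEq o] {n : o → ℕ}
    {X M : ∀ s, Matrix (Fin (n s)) (Fin (n s)) ℝ} (hX : ∀ s, (X s).PosSemidef)
    (hker : ∀ s, LinearMap.ker (X s).mulVecLin = Submodule.span ℝ {onesV (n s)})
    (hM : ∀ s, (M s).PosDef) :
    (blockDiagonal' X + blockDiagonal' fun s => Qblk (M s)).PosDef := by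
  rw [← blockDiagonal'_add]
  exact posDef_blockDiagonal' fun s => posDef_add_Qblk (hX s) (hker s) (hM s)

end RankOneCorrection

section SaddlePointMatrix

variable {ι κ : Type*} [Fintype ι] [Fintype κ] [DecidableEq ι] [DecidableEq κ]
  {A HA : Matrix ι ι ℝ} {B : Matrix κ ι ℝ}

lemma exists_isSaddleEigenpair_of_sq {F W : Matrix κ κ ℝ} (hA : A.IsHermitian) (hHA : HA.PosDef)
    (hF : F.IsHermitian) (hW : W.PosDef) {lam : ℂ} {x : ι ⊕ κ → ℂ} (hx : x ≠ 0)
    (h : ((fromBlocks HA 0 0 W⁻¹ * fromBlocks A Bᵀ B (-F)) ^ 2).map Complex.ofReal *ᵥ x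
      = lam • x) :
    ∃ μ u p, IsSaddleEigenpair A HA⁻¹ B F W μ u p ∧ lam = ((μ ^ 2 : ℝ) : ℂ) := by
  have hK : (fromBlocks A Bᵀ B (-F)).IsHermitian :=
    hA.fromBlocks (transpose_transpose B) hF.neg
  have hsplits := splits_charpoly_mul_of_posSemidef
    (posSemidef_fromBlocks_zero hHA.posSemidef hW.inv.posSemidef) hK
  obtain ⟨μ, v, hv, hμv, rfl⟩ := exists_eigenvector_of_pow_map hsplits two_pos hx h
  exact ⟨μ, _, _, isSaddleEigenpair_of_mulVec_eq_smul hHA.isUnit hW.isUnit hv hμv,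
    (Complex.ofReal_pow μ 2).symm⟩

theorem stmt0_general {D Q R : Matrix κ κ ℝ} {c e β₁ β₂ : ℝ}
    (hA : A.PosDef) (hHA : HA.PosDef) (hQ : Q.PosSemidef) (hR : R.PosSemidef)
    (hDQ : (D + Q).PosDef) (hc : 1 ≤ c) (he : 0 ≤ e) (hβ₁ : 0 < β₁)
    (hSD : B * A⁻¹ * Bᵀ ≤ D) (hDS : D ≤ c • (B * A⁻¹ * Bᵀ)) (hRD : R ≤ e • D)
    (hAHA : β₁ • A ≤ HA⁻¹) (hHAA : HA⁻¹ ≤ β₂ • A) {lam : ℂ} {x : ι ⊕ κ → ℂ} (hx : x ≠ 0)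
    (h : ((fromBlocks HA 0 0 (D + Q)⁻¹ * fromBlocks A Bᵀ B (-R - Q)) ^ 2).map Complex.ofReal *ᵥ x
      = lam • x) :
    lam.im = 0 ∧ min |ψ / max β₂ c| (1 / max β₂ c) ^ 2 ≤ lam.re ∧
      lam.re ≤ max |lowerRoot (c * e) / min β₁ 1| (φ / min β₁ 1) ^ 2 := by
  rw [← neg_add'] at h
  obtain ⟨μ, u, p, hup, rfl⟩ :=
    exists_isSaddleEigenpair_of_sq hA.isHermitian hHA (hR.add hQ).isHermitian hDQ hx h
  have hmin : 0 < min β₁ 1 := lt_min hβ₁ one_pos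
  have hmax : 0 < max β₂ c := lt_max_of_lt_right (one_pos.trans_le hc)
  have hS : 0 ≤ B * A⁻¹ * Bᵀ := (posSemidef_schur hA.posSemidef B).nonneg
  have hQF : Q ≤ R + Q := le_add_of_nonneg_left hR.nonneg
  have hFS : R + Q ≤ (c * e) • (B * A⁻¹ * Bᵀ) + Q := by
    rw [mul_comm, mul_smul]
    gcongr
    exact hRD.trans (smul_le_smul_of_nonneg_left hDS he)
  have hWS : D + Q ≤ max β₂ c • (B * A⁻¹ * Bᵀ + Q) := by
    rw [smul_add]
    exact add_le_add (hDS.trans (smul_le_smul_of_nonneg_right (le_max_right _ _) hS))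
      (le_smul_of_one_le_left hQ.nonneg (hc.trans (le_max_right _ _)))
  have hSW : min β₁ 1 • (B * A⁻¹ * Bᵀ + Q) ≤ D + Q :=
    (smul_le_of_le_one_left (add_nonneg hS hQ.nonneg) (min_le_right _ _)).trans
      (add_le_add_left hSD Q)
  have hAG : min β₁ 1 • A ≤ HA⁻¹ :=
    (smul_le_smul_of_nonneg_right (min_le_left _ _) hA.posSemidef.nonneg).trans hAHA
  have hGA : HA⁻¹ ≤ max β₂ c • A :=
    hHAA.trans (smul_le_smul_of_nonneg_right (le_max_left _ _) hA.posSemidef.nonneg)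
  have hlow : -ψ ≤ |μ| * max β₂ c :=
    hup.neg_goldenConj_le_abs_mul hA hHA.inv.posSemidef hDQ hQ hQF hmax.le hGA hWS
  have hhigh : |μ| * min β₁ 1 ≤ max (-lowerRoot (c * e)) φ :=
    hup.abs_mul_le hA hHA.inv hDQ hQ hQF hFS hmin.le hAG hSW
  rw [Complex.ofReal_im, Complex.ofReal_re]
  exact ⟨rfl, min_abs_div_sq_le_sq hmax Real.goldenConj_neg.le zero_le_one hlow,
    sq_le_max_abs_div_sq hmin hhigh⟩

end SaddlePointMatrix

/-- with the block-diagonal preconditioner `H = diag(H_A, (B_D+Q)⁻¹)`,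
every eigenvalue of `(H·A_ε)²` is real and lies in `[a², b²]`. -/
theorem stmt0
    (m : ℕ) (hm : 1 ≤ m) (ns : Fin m → ℕ) (hns : ∀ s, 0 < ns s)
    (M Bb : ∀ s : Fin m, Matrix (Fin (ns s)) (Fin (ns s)) ℝ)
    (hM : ∀ s, (M s).PosDef) (hBb : ∀ s, (Bb s).PosSemidef)
    (hker : ∀ s, LinearMap.ker (Bb s).mulVecLin = Submodule.span ℝ {onesV (ns s)})
    (n0 : ℕ) (hn0 : 1 ≤ n0)
    (A : Matrix ((Σ s, Fin (ns s)) ⊕ Fin n0) ((Σ s, Fin (ns s)) ⊕ Fin n0) ℝ)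
    (hA : A.PosDef)
    (BD Q : Matrix (Σ s, Fin (ns s)) (Σ s, Fin (ns s)) ℝ)
    (hBD : BD = blockDiagonal' Bb)
    (hQ : Q = blockDiagonal' fun s => Qblk (M s))
    (B : Matrix (Σ s, Fin (ns s)) ((Σ s, Fin (ns s)) ⊕ Fin n0) ℝ)
    (hB : B = fromCols BD 0)
    (S0 : Matrix (Σ s, Fin (ns s)) (Σ s, Fin (ns s)) ℝ)
    (hS0 : S0 = B * A⁻¹ * Bᵀ)
    -- (i) Loewner bounds  S₀ ≼ B_D ≼ (1+C²)·S₀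
    (C : ℝ) (hC : 0 < C)
    (hLoe1 : (BD - S0).PosSemidef)
    (hLoe2 : ((1 + C ^ 2) • S0 - BD).PosSemidef)
    -- (ii) the contrast parameters
    (ε : Fin m → ℝ) (hε : ∀ s, 0 < ε s ∧ ε s ≤ 1)
    (εmax : ℝ) (hεub : ∀ s, ε s ≤ εmax) (hεmem : ∃ s, ε s = εmax)
    (Sig : Matrix (Σ s, Fin (ns s)) (Σ s, Fin (ns s)) ℝ)
    (hSig : Sig = blockDiagonal' fun s => ε s • (1 : Matrix (Fin (ns s)) (Fin (ns s)) ℝ))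
    -- (iii) the preconditioner block H_A with β₁·A ≼ H_A⁻¹ ≼ β₂·A
    (HA : Matrix ((Σ s, Fin (ns s)) ⊕ Fin n0) ((Σ s, Fin (ns s)) ⊕ Fin n0) ℝ)
    (hHA : HA.PosDef) (β₁ β₂ : ℝ) (hβ₁ : 0 < β₁) (hβ₁₂ : β₁ ≤ β₂)
    (hHb1 : (HA⁻¹ - β₁ • A).PosSemidef) (hHb2 : (β₂ • A - HA⁻¹).PosSemidef)
    -- the saddle point matrix and the preconditioner
    (Aε : Matrix (((Σ s, Fin (ns s)) ⊕ Fin n0) ⊕ (Σ s, Fin (ns s)))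
          (((Σ s, Fin (ns s)) ⊕ Fin n0) ⊕ (Σ s, Fin (ns s))) ℝ)
    (hAε : Aε = fromBlocks A Bᵀ B (-(Sig * BD) - Q))
    (H : Matrix (((Σ s, Fin (ns s)) ⊕ Fin n0) ⊕ (Σ s, Fin (ns s)))
         (((Σ s, Fin (ns s)) ⊕ Fin n0) ⊕ (Σ s, Fin (ns s))) ℝ)
    (hH : H = fromBlocks HA 0 0 (BD + Q)⁻¹)
    -- the constants
    (rmax μh1 μh2 μc1 αmin αmax C1 C2 C3 C4 a b : ℝ)
    (hrmax : rmax = (1 + C ^ 2) * εmax)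
    (hμh1 : μh1 = (1 - Real.sqrt 5) / 2) (hμh2 : μh2 = (1 + Real.sqrt 5) / 2)
    (hμc1 : μc1 = ((1 - rmax) - Real.sqrt ((1 - rmax) ^ 2 + 4 * (1 + rmax))) / 2)
    (hαmin : αmin = min β₁ 1) (hαmax : αmax = max β₂ (1 + C ^ 2))
    (hC1 : C1 = μc1 / αmin) (hC2 : C2 = μh1 / αmax)
    (hC3 : C3 = 1 / αmax) (hC4 : C4 = μh2 / αmin)
    (ha : a = min |C2| C3) (hb : b = max |C1| C4) :
    ∀ (lam : ℂ) (x : (((Σ s, Fin (ns s)) ⊕ Fin n0) ⊕ (Σ s, Fin (ns s))) → ℂ),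
      x ≠ 0 → (((H * Aε) ^ 2).map Complex.ofReal).mulVec x = lam • x →
      lam.im = 0 ∧ a ^ 2 ≤ lam.re ∧ lam.re ≤ b ^ 2 := by
  subst hBD hQ hS0 hSig hAε hH hrmax hμh1 hμh2 hμc1 hαmin hαmax hC1 hC2 hC3 hC4 ha hb
  obtain ⟨s, rfl⟩ := hεmem
  rw [blockDiagonal'_smul_one_mul]
  intro lam x hx h
  exact stmt0_general hA hHA (posSemidef_blockDiagonal' fun t => posSemidef_Qblk (hM t).posSemidef)
    (posSemidef_blockDiagonal' fun t => (hBb t).smul (hε t).1.le)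
    (posDef_blockDiagonal'_add_Qblk hBb hker hM) (le_add_of_nonneg_right (sq_nonneg C)) (hε s).1.le
    hβ₁ hLoe1 hLoe2 (blockDiagonal'_smul_le hBb hεub) hHb1 hHb2 hx h
end

section
/- Under the block setup and outer setup, let Â = [[A, Bᵀ],[B, −Q]] and H_0^{−1} = diag(A, S_0 + Q). Suppose (v, w) ∈ R^N × R^n is nonzero, Â·(v,w) = μ·H_0^{−1}·(v,w) for a real number μ ≠ 1, and w satisfies the orthogonality conditions e_sᵀ M_s w_s = 0 for all s ∈ {1,…,m}. Then μ = (1−√5)/2 or μ = (1+√5)/2. -/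
open Matrix

/-!
Write `S = B A⁻¹ Bᵀ`. Orthogonality gives `Q w = 0`, so the two block rows of the eigenvalue
equation read `Bᵀ w = (μ - 1) A v` and `B v = μ S w`. Applying `B A⁻¹` to the first and inserting
the second gives `S w = (μ - 1) μ S w`, so `μ ^ 2 = μ + 1` as soon as `S w ≠ 0`. If `S w` were zero,
then `Bᵀ w = 0` because `A⁻¹` is definite. Each block of `w` would then be a multiple of `e_s`,
and orthogonality to `M_s e_s` would force `w = 0` and, since `μ ≠ 1`, also `v = 0`.
-/

section SchurComplement

variable {m n R : Type*} [Fintype m] [Fintype n]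

theorem fromBlocks_neg_mulVec_eq_smul_iff [CommRing R] {A : Matrix m m R} {B : Matrix n m R}
    {C : Matrix m n R} {Q S : Matrix n n R} {v : m → R} {w : n → R} {μ : R} (hQw : Q *ᵥ w = 0) :
    fromBlocks A C B (-Q) *ᵥ Sum.elim v w = μ • fromBlocks A 0 0 (S + Q) *ᵥ Sum.elim v w ↔
      C *ᵥ w = (μ - 1) • A *ᵥ v ∧ B *ᵥ v = μ • S *ᵥ w := by
  have hsmul (x : m → R) (y : n → R) : μ • Sum.elim x y = Sum.elim (μ • x) (μ • y) :=
    Sum.comp_elim (μ • ·) x y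
  simp only [fromBlocks_mulVec, Sum.elim_comp_inl, Sum.elim_comp_inr, neg_mulVec, add_mulVec, hQw,
    zero_mulVec, neg_zero, add_zero, zero_add, hsmul, Sum.elim_eq_iff]
  rw [sub_smul, one_smul, eq_sub_iff_add_eq']

theorem mul_inv_mul_mulVec_eq_smul [CommRing R] [DecidableEq m] {A : Matrix m m R}
    {B : Matrix n m R} {C : Matrix m n R} {v : m → R} {w : n → R} {c : R} (hA : IsUnit A.det)
    (h : C *ᵥ w = c • A *ᵥ v) : (B * A⁻¹ * C) *ᵥ w = c • B *ᵥ v := by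
  rw [← mulVec_mulVec, h, mulVec_smul, mulVec_mulVec, nonsing_inv_mul_cancel_right _ _ hA]

theorem mul_mul_conjTranspose_mulVec_eq_zero_iff [Ring R] [PartialOrder R] [StarRing R]
    {A : Matrix m m R} (hA : A.PosDef) {B : Matrix n m R} {w : n → R} :
    (B * A * Bᴴ) *ᵥ w = 0 ↔ Bᴴ *ᵥ w = 0 := by
  refine ⟨fun h => ?_, fun h => by rw [← mulVec_mulVec, h, mulVec_zero]⟩
  by_contra hne
  have hform : star (Bᴴ *ᵥ w) ⬝ᵥ A *ᵥ (Bᴴ *ᵥ w) = star w ⬝ᵥ (B * A * Bᴴ) *ᵥ w := by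
    rw [star_mulVec, conjTranspose_conjTranspose, ← dotProduct_mulVec, mulVec_mulVec,
      mulVec_mulVec, Matrix.mul_assoc]
  have hpos := hA.dotProduct_mulVec_pos hne
  rw [hform, h, dotProduct_zero] at hpos
  exact hpos.false

theorem sq_eq_add_one_of_fromBlocks_mulVec_eq_smul [Field R] [PartialOrder R] [StarRing R]
    [DecidableEq m] {A : Matrix m m R} {B : Matrix n m R} {Q : Matrix n n R} {v : m → R}
    {w : n → R} {μ : R} (hA : A.PosDef) (hQw : Q *ᵥ w = 0) (hBw : Bᴴ *ᵥ w = 0 → w = 0)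
    (hvw : Sum.elim v w ≠ 0) (hμ : μ ≠ 1)
    (heig : fromBlocks A Bᴴ B (-Q) *ᵥ Sum.elim v w =
      μ • fromBlocks A 0 0 (B * A⁻¹ * Bᴴ + Q) *ᵥ Sum.elim v w) :
    μ ^ 2 = μ + 1 := by
  have hdet : IsUnit A.det := (isUnit_iff_isUnit_det A).1 hA.isUnit
  obtain ⟨hrow₁, hrow₂⟩ := (fromBlocks_neg_mulVec_eq_smul_iff hQw).1 heig
  have hSw : (B * A⁻¹ * Bᴴ) *ᵥ w ≠ 0 := by
    intro hSw
    have hw : w = 0 := hBw ((mul_mul_conjTranspose_mulVec_eq_zero_iff hA.inv).1 hSw)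
    have hAv : A *ᵥ v = 0 := by simpa [hw, sub_eq_zero, hμ] using hrow₁.symm
    have hv : v = 0 := eq_zero_of_mulVec_eq_zero hdet.ne_zero hAv
    exact hvw (by rw [hv, hw, Sum.elim_zero_zero])
  have hquad : (1 : R) • (B * A⁻¹ * Bᴴ) *ᵥ w = ((μ - 1) * μ) • (B * A⁻¹ * Bᴴ) *ᵥ w := by
    rw [one_smul, mul_smul, ← hrow₂, mul_inv_mul_mulVec_eq_smul hdet hrow₁]
  have hone : 1 = (μ - 1) * μ := smul_left_injective R hSw hquad
  linear_combination -hone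

end SchurComplement

section BlockDiagonal

variable {ι R : Type*} {m n : ι → Type*} [Fintype ι] [DecidableEq ι] [∀ s, Fintype (n s)]
  [NonUnitalNonAssocSemiring R]

theorem blockDiagonal'_mulVec_apply (C : ∀ s, Matrix (m s) (n s) R) (w : (Σ s, n s) → R) (s : ι)
    (i : m s) :
    (blockDiagonal' C *ᵥ w) ⟨s, i⟩ = (C s *ᵥ fun j => w ⟨s, j⟩) i := by
  simp only [mulVec, dotProduct, Fintype.sum_sigma]
  rw [Fintype.sum_eq_single s fun t hts => by
    simp only [blockDiagonal'_apply_ne _ _ _ hts.symm, zero_mul, Finset.sum_const_zero]]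
  simp only [blockDiagonal'_apply_eq]

theorem blockDiagonal'_mulVec_eq_zero_iff {C : ∀ s, Matrix (m s) (n s) R} {w : (Σ s, n s) → R} :
    blockDiagonal' C *ᵥ w = 0 ↔ ∀ s, (C s *ᵥ fun j => w ⟨s, j⟩) = 0 := by
  simp only [funext_iff, Sigma.forall, blockDiagonal'_mulVec_apply, Pi.zero_apply]

end BlockDiagonal

theorem transpose_fromCols_zero_mulVec_eq_zero_iff {m n o R : Type*} [Fintype m]
    [Semiring R] {B : Matrix m n R} {w : m → R} :
    (fromCols B (0 : Matrix m o R))ᵀ *ᵥ w = 0 ↔ Bᵀ *ᵥ w = 0 := by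
  rw [transpose_fromCols, fromRows_mulVec, transpose_zero, zero_mulVec, ← Sum.elim_zero_zero,
    Sum.elim_eq_iff, and_iff_left rfl]

theorem eq_zero_of_mem_span_singleton_of_dotProduct_mulVec_eq_zero {n R : Type*} [Fintype n]
    [CommSemiring R] [NoZeroDivisors R] {M : Matrix n n R} {u w : n → R}
    (hu : u ⬝ᵥ M *ᵥ u ≠ 0) (hw : w ∈ Submodule.span R {u}) (huw : u ⬝ᵥ M *ᵥ w = 0) : w = 0 := by
  obtain ⟨c, rfl⟩ := Submodule.mem_span_singleton.1 hw
  rw [mulVec_smul, dotProduct_smul, smul_eq_mul] at huw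
  rw [(mul_eq_zero.1 huw).resolve_right hu, zero_smul]

theorem Qblk_mulVec_eq_zero {k : ℕ} {M : Matrix (Fin k) (Fin k) ℝ} (hM : M.IsSymm)
    {w : Fin k → ℝ} (hw : onesV k ⬝ᵥ M *ᵥ w = 0) : Qblk M *ᵥ w = 0 := by
  have hMw : M *ᵥ onesV k ⬝ᵥ w = 0 := by
    rwa [← vecMul_transpose, hM.eq, ← dotProduct_mulVec]
  rw [Qblk, smul_mulVec, vecMulVec_mulVec, hMw, MulOpposite.op_zero, zero_smul, smul_zero]

theorem onesV_dotProduct_mulVec_pos {k : ℕ} (hk : 0 < k) {M : Matrix (Fin k) (Fin k) ℝ}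
    (hM : M.PosDef) : 0 < onesV k ⬝ᵥ M *ᵥ onesV k := by
  have hones : onesV k ≠ 0 := fun h => one_ne_zero (congrFun h ⟨0, hk⟩)
  simpa only [star_trivial] using hM.dotProduct_mulVec_pos hones

theorem sq_eq_add_one_iff_eq_goldenConj_or_eq_goldenRatio {x : ℝ} :
    x ^ 2 = x + 1 ↔ x = Real.goldenConj ∨ x = Real.goldenRatio := by
  have hfactor : x ^ 2 - (x + 1) = (x - Real.goldenConj) * (x - Real.goldenRatio) := by
    linear_combination
      x * Real.goldenRatio_add_goldenConj - Real.goldenRatio_mul_goldenConj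
  rw [← sub_eq_zero, hfactor, mul_eq_zero, sub_eq_zero, sub_eq_zero]

theorem stmt1_general {ι o : Type*} [Fintype ι] [DecidableEq ι] [Fintype o] [DecidableEq o]
    {ns : ι → ℕ} {M Bb : ∀ s, Matrix (Fin (ns s)) (Fin (ns s)) ℝ} (hM : ∀ s, (M s).IsSymm)
    (hones : ∀ s, onesV (ns s) ⬝ᵥ M s *ᵥ onesV (ns s) ≠ 0)
    (hker : ∀ s, LinearMap.ker (Bb s)ᵀ.mulVecLin ≤ Submodule.span ℝ {onesV (ns s)})
    {A : Matrix ((Σ s, Fin (ns s)) ⊕ o) ((Σ s, Fin (ns s)) ⊕ o) ℝ} (hA : A.PosDef)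
    {Q : Matrix (Σ s, Fin (ns s)) (Σ s, Fin (ns s)) ℝ}
    (hQ : Q = blockDiagonal' fun s => Qblk (M s))
    {B : Matrix (Σ s, Fin (ns s)) ((Σ s, Fin (ns s)) ⊕ o) ℝ}
    (hB : B = fromCols (blockDiagonal' Bb) 0)
    {v : (Σ s, Fin (ns s)) ⊕ o → ℝ} {w : (Σ s, Fin (ns s)) → ℝ} (hvw : Sum.elim v w ≠ 0)
    {μ : ℝ} (hμ : μ ≠ 1)
    (heig : fromBlocks A Bᵀ B (-Q) *ᵥ Sum.elim v w =
      μ • fromBlocks A 0 0 (B * A⁻¹ * Bᵀ + Q) *ᵥ Sum.elim v w)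
    (horth : ∀ s, (onesV (ns s) ⬝ᵥ M s *ᵥ fun i => w ⟨s, i⟩) = 0) :
    μ = (1 - √5) / 2 ∨ μ = (1 + √5) / 2 := by
  have hQw : Q *ᵥ w = 0 := by
    rw [hQ, blockDiagonal'_mulVec_eq_zero_iff]
    exact fun s => Qblk_mulVec_eq_zero (hM s) (horth s)
  have hBw (h : Bᵀ *ᵥ w = 0) : w = 0 := by
    rw [hB, transpose_fromCols_zero_mulVec_eq_zero_iff, blockDiagonal'_transpose,
      blockDiagonal'_mulVec_eq_zero_iff] at h
    ext ⟨s, i⟩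
    exact congrFun (eq_zero_of_mem_span_singleton_of_dotProduct_mulVec_eq_zero (hones s)
      (hker s (h s)) (horth s)) i
  rw [← conjTranspose_eq_transpose_of_trivial] at heig hBw
  exact sq_eq_add_one_iff_eq_goldenConj_or_eq_goldenRatio.1
    (sq_eq_add_one_of_fromBlocks_mulVec_eq_smul hA hQw hBw hvw hμ heig)

/-- the nontrivial eigenvalues of the pencil `(Â, H₀⁻¹)`, with eigenvectors whose
second component is M-orthogonal to the kernels, are `(1∓√5)/2`. -/
theorem stmt1
    (m : ℕ) (hm : 1 ≤ m) (ns : Fin m → ℕ) (hns : ∀ s, 0 < ns s)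
    (M Bb : ∀ s : Fin m, Matrix (Fin (ns s)) (Fin (ns s)) ℝ)
    (hM : ∀ s, (M s).PosDef) (hBb : ∀ s, (Bb s).PosSemidef)
    (hker : ∀ s, LinearMap.ker (Bb s).mulVecLin = Submodule.span ℝ {onesV (ns s)})
    (n0 : ℕ) (hn0 : 1 ≤ n0)
    (A : Matrix ((Σ s, Fin (ns s)) ⊕ Fin n0) ((Σ s, Fin (ns s)) ⊕ Fin n0) ℝ)
    (hA : A.PosDef)
    (BD Q : Matrix (Σ s, Fin (ns s)) (Σ s, Fin (ns s)) ℝ)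
    (hBD : BD = blockDiagonal' Bb)
    (hQ : Q = blockDiagonal' fun s => Qblk (M s))
    (B : Matrix (Σ s, Fin (ns s)) ((Σ s, Fin (ns s)) ⊕ Fin n0) ℝ)
    (hB : B = fromCols BD 0)
    (S0 : Matrix (Σ s, Fin (ns s)) (Σ s, Fin (ns s)) ℝ)
    (hS0 : S0 = B * A⁻¹ * Bᵀ)
    (v : ((Σ s, Fin (ns s)) ⊕ Fin n0) → ℝ) (w : (Σ s, Fin (ns s)) → ℝ)
    (hvw : Sum.elim v w ≠ 0)
    (μ : ℝ) (hμ : μ ≠ 1)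
    (heig : (fromBlocks A Bᵀ B (-Q)).mulVec (Sum.elim v w)
            = μ • (fromBlocks A 0 0 (S0 + Q)).mulVec (Sum.elim v w))
    (horth : ∀ s : Fin m, onesV (ns s) ⬝ᵥ (M s).mulVec (fun i => w ⟨s, i⟩) = 0) :
    μ = (1 - Real.sqrt 5) / 2 ∨ μ = (1 + Real.sqrt 5) / 2 := by
  subst hBD hS0
  exact stmt1_general (fun s => isHermitian_iff_isSymm.1 (hM s).isHermitian)
    (fun s => (onesV_dotProduct_mulVec_pos (hns s) (hM s)).ne')
    (fun s => (isHermitian_iff_isSymm.1 (hBb s).isHermitian).eq.symm ▸ (hker s).le)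
    hA hQ hB hvw hμ heig horth
end

section
/- Under the block setup, let Q̃ = diag(Q̃_1,…,Q̃_m) with Q̃_s = (1/d_s²)·e_s (M_s e_s)ᵀ. Then (B_D + Q)^{−1} B_D = I − Q̃ and (B_D + Q)^{−1} Q = Q̃. Consequently B_D (B_D + Q)^{−1} B_D = B_D and Q (B_D + Q)^{−1} Q = Q. -/
open Matrix

/-- The rank-one block `Q̃_s = (1/d_s²) e_s (M_s e_s)ᵀ`. -/
noncomputable def Qtblk {k : ℕ} (M : Matrix (Fin k) (Fin k) ℝ) : Matrix (Fin k) (Fin k) ℝ :=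
  (onesV k ⬝ᵥ M.mulVec (onesV k))⁻¹ • vecMulVec (onesV k) (M.mulVec (onesV k))

/-!
On each block the kernel of `B` is the line spanned by `e`, and `Q = u wᵀ` with `u` outside the
range of `B` and `wᵀ e ≠ 0`, so `B + Q` is invertible. The projection `P = e wᵀ / (wᵀ e)` onto that
line satisfies `B P = 0` and `Q P = Q`. Hence `(B + Q) P = Q`, and cancelling `B + Q` gives
`(B + Q)⁻¹ Q = P` and `(B + Q)⁻¹ B = 1 - P`.
-/

section RingInverse

open scoped Ring

theorem inverse_add_mul_right {R : Type*} [Semiring R] {a p q : R} (h : IsUnit (a + q))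
    (hap : a * p = 0) (hqp : q * p = q) : (a + q)⁻¹ʳ * q = p :=
  calc
    (a + q)⁻¹ʳ * q = (a + q)⁻¹ʳ * ((a + q) * p) := by rw [add_mul, hap, hqp, zero_add]
    _ = p := Ring.inverse_mul_cancel_left _ _ h

theorem inverse_add_mul_left {R : Type*} [Ring R] {a p q : R} (h : IsUnit (a + q))
    (hap : a * p = 0) (hqp : q * p = q) : (a + q)⁻¹ʳ * a = 1 - p :=
  calc
    (a + q)⁻¹ʳ * a = (a + q)⁻¹ʳ * (a + q) - (a + q)⁻¹ʳ * q := by rw [mul_add, add_sub_cancel_right]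
    _ = 1 - p := by rw [Ring.inverse_mul_cancel _ h, inverse_add_mul_right h hap hqp]

end RingInverse

section RankOne

variable {K n : Type*} [Field K] [Fintype n]

theorem vecMulVec_mul_inv_smul_vecMulVec {m : Type*} {e w : n → K} (hew : e ⬝ᵥ w ≠ 0) (u : m → K) :
    vecMulVec u w * ((e ⬝ᵥ w)⁻¹ • vecMulVec e w) = vecMulVec u w := by
  rw [Matrix.mul_smul, vecMulVec_mul_vecMulVec, dotProduct_comm w, vecMulVec_smul,
    inv_smul_smul₀ hew]

theorem isUnit_add_vecMulVec [DecidableEq n] {B : Matrix n n K} {e u w : n → K}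
    (hker : LinearMap.ker B.mulVecLin ≤ Submodule.span K {e})
    (hu : u ∉ LinearMap.range B.mulVecLin) (hew : e ⬝ᵥ w ≠ 0) :
    IsUnit (B + vecMulVec u w) := by
  rw [← mulVec_injective_iff_isUnit, ← coe_mulVecLin, ← LinearMap.ker_eq_bot,
    LinearMap.ker_eq_bot']
  intro x hx
  have hsum : B *ᵥ x + (w ⬝ᵥ x) • u = 0 := by
    simpa [add_mulVec, vecMulVec_mulVec] using hx
  have hwx : w ⬝ᵥ x = 0 := by
    by_contra hwx
    refine hu ⟨-(w ⬝ᵥ x)⁻¹ • x, ?_⟩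
    rw [mulVecLin_apply, mulVec_smul, eq_neg_of_add_eq_zero_left hsum, neg_smul_neg,
      inv_smul_smul₀ hwx]
  have hBx : x ∈ LinearMap.ker B.mulVecLin := by simpa [hwx] using hsum
  obtain ⟨c, rfl⟩ := Submodule.mem_span_singleton.mp (hker hBx)
  have hc : c = 0 := by simpa [dotProduct_comm w, hew] using hwx
  rw [hc, zero_smul]

end RankOne

theorem mulVec_eq_zero_of_ker_mulVecLin_eq_span {R m n : Type*} [CommSemiring R] [Fintype n]
    {A : Matrix m n R} {e : n → R}
    (hker : LinearMap.ker A.mulVecLin = Submodule.span R {e}) : A *ᵥ e = 0 := by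
  simpa only [LinearMap.mem_ker, mulVecLin_apply] using
    hker.ge (Submodule.mem_span_singleton_self e)

theorem notMem_range_mulVecLin_of_isSymm {R n : Type*} [CommSemiring R] [Fintype n]
    {A : Matrix n n R} {e u : n → R} (hA : A.IsSymm) (hAe : A *ᵥ e = 0) (heu : e ⬝ᵥ u ≠ 0) :
    u ∉ LinearMap.range A.mulVecLin := by
  rintro ⟨x, rfl⟩
  apply heu
  rw [mulVecLin_apply, dotProduct_mulVec, ← mulVec_transpose, hA.eq, hAe, zero_dotProduct]

theorem stmt5_general {K ι : Type*} {n : ι → Type*} [Field K] [Fintype ι] [DecidableEq ι]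
    [∀ s, Fintype (n s)] [∀ s, DecidableEq (n s)]
    (B : ∀ s, Matrix (n s) (n s) K) (e u w : ∀ s, n s → K)
    (hker : ∀ s, LinearMap.ker (B s).mulVecLin = Submodule.span K {e s})
    (hu : ∀ s, u s ∉ LinearMap.range (B s).mulVecLin) (hew : ∀ s, e s ⬝ᵥ w s ≠ 0)
    (BD Q Qt : Matrix (Σ s, n s) (Σ s, n s) K)
    (hBD : BD = blockDiagonal' B)
    (hQ : Q = blockDiagonal' fun s => vecMulVec (u s) (w s))
    (hQt : Qt = blockDiagonal' fun s => (e s ⬝ᵥ w s)⁻¹ • vecMulVec (e s) (w s)) :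
    (BD + Q)⁻¹ * BD = 1 - Qt ∧
    (BD + Q)⁻¹ * Q = Qt ∧
    BD * (BD + Q)⁻¹ * BD = BD ∧
    Q * (BD + Q)⁻¹ * Q = Q := by
  have hBe (s : ι) : B s *ᵥ e s = 0 := mulVec_eq_zero_of_ker_mulVecLin_eq_span (hker s)
  have hunit : IsUnit (BD + Q) := by
    rw [hBD, hQ, ← blockDiagonal'_add]
    exact (Pi.isUnit_iff.mpr fun s => isUnit_add_vecMulVec (hker s).le (hu s) (hew s)).map
      (blockDiagonal'RingHom n K)
  have hBQt : BD * Qt = 0 := by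
    simp only [hBD, hQt, ← blockDiagonal'_mul, Matrix.mul_smul, mul_vecMulVec, hBe, zero_vecMulVec,
      smul_zero]
    exact blockDiagonal'_zero
  have hQQt : Q * Qt = Q := by
    simp only [hQ, hQt, ← blockDiagonal'_mul, vecMulVec_mul_inv_smul_vecMulVec (hew _)]
  have hB : (BD + Q)⁻¹ * BD = 1 - Qt := by
    rw [nonsing_inv_eq_ringInverse, inverse_add_mul_left hunit hBQt hQQt]
  have hQ' : (BD + Q)⁻¹ * Q = Qt := by
    rw [nonsing_inv_eq_ringInverse, inverse_add_mul_right hunit hBQt hQQt]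
  refine ⟨hB, hQ', ?_, ?_⟩
  · rw [Matrix.mul_assoc, hB, Matrix.mul_sub, Matrix.mul_one, hBQt, sub_zero]
  · rw [Matrix.mul_assoc, hQ', hQQt]

theorem onesV_ne_zero {k : ℕ} (hk : 0 < k) : onesV k ≠ 0 :=
  fun h => one_ne_zero (congrFun h ⟨0, hk⟩)

theorem onesV_dotProduct_mulVec_ne_zero {k : ℕ} {M : Matrix (Fin k) (Fin k) ℝ} (hk : 0 < k)
    (hM : M.PosDef) : onesV k ⬝ᵥ M *ᵥ onesV k ≠ 0 :=
  (hM.dotProduct_mulVec_pos (onesV_ne_zero hk)).ne'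

theorem Qblk_eq_vecMulVec {k : ℕ} (M : Matrix (Fin k) (Fin k) ℝ) :
    Qblk M = vecMulVec ((onesV k ⬝ᵥ M *ᵥ onesV k)⁻¹ • M *ᵥ onesV k) (M *ᵥ onesV k) :=
  (smul_vecMulVec _ _ _).symm

/-- `(B_D+Q)⁻¹ B_D = I − Q̃`, `(B_D+Q)⁻¹ Q = Q̃`, and consequently
`B_D (B_D+Q)⁻¹ B_D = B_D` and `Q (B_D+Q)⁻¹ Q = Q`. -/
theorem stmt5
    (m : ℕ) (hm : 1 ≤ m) (ns : Fin m → ℕ) (hns : ∀ s, 0 < ns s)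
    (M Bb : ∀ s : Fin m, Matrix (Fin (ns s)) (Fin (ns s)) ℝ)
    (hM : ∀ s, (M s).PosDef) (hBb : ∀ s, (Bb s).PosSemidef)
    (hker : ∀ s, LinearMap.ker (Bb s).mulVecLin = Submodule.span ℝ {onesV (ns s)})
    (BD Q Qt : Matrix (Σ s, Fin (ns s)) (Σ s, Fin (ns s)) ℝ)
    (hBD : BD = blockDiagonal' Bb)
    (hQ : Q = blockDiagonal' fun s => Qblk (M s))
    (hQt : Qt = blockDiagonal' fun s => Qtblk (M s)) :
    (BD + Q)⁻¹ * BD = 1 - Qt ∧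
    (BD + Q)⁻¹ * Q = Qt ∧
    BD * (BD + Q)⁻¹ * BD = BD ∧
    Q * (BD + Q)⁻¹ * Q = Q := by
  have hd (s : Fin m) := onesV_dotProduct_mulVec_ne_zero (hns s) (hM s)
  have hMe (s : Fin m) : M s *ᵥ onesV (ns s) ∉ LinearMap.range (Bb s).mulVecLin :=
    notMem_range_mulVecLin_of_isSymm (hBb s).isHermitian
      (mulVec_eq_zero_of_ker_mulVecLin_eq_span (hker s)) (hd s)
  exact stmt5_general Bb _ _ (fun s => M s *ᵥ onesV (ns s)) hker
    (fun s => (Submodule.smul_mem_iff _ (inv_ne_zero (hd s))).not.mpr (hMe s)) hd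
    BD Q Qt hBD (by simpa only [Qblk_eq_vecMulVec] using hQ) hQt
end

section
/- Let A be a real symmetric positive definite N×N matrix, B a real n×N matrix, and C a real symmetric n×n matrix such that C + B A^{−1} Bᵀ is positive definite. Then the symmetric saddle point matrix 𝒜 = [[A, Bᵀ],[B, −C]] ∈ R^{(N+n)×(N+n)} is nonsingular and has exactly N positive eigenvalues and n negative eigenvalues (counted with multiplicity). -/
/-!
A subspace on which a Hermitian form is positive (negative) definite has dimension at most the
number of positive (negative) eigenvalues. For the saddle point matrix, the subspace `{(x, 0)}`
carries the form `A`, and its orthogonal complement `{(-A⁻¹ Bᵀ y, y)}` with respect to the form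
carries `-(C + B A⁻¹ Bᵀ)`. These dimensions `N` and `n` already add up to the size of the matrix,
so both bounds are equalities.
-/

open Matrix

theorem card_filter_add_card_filter_le {α : Type*} {p q : α → Prop} [DecidablePred p]
    [DecidablePred q] (hpq : ∀ a, p a → ¬ q a) (s : Multiset α) :
    Multiset.card (s.filter p) + Multiset.card (s.filter q) ≤ Multiset.card s := by
  have hq : s.filter q ≤ s.filter (¬ p ·) :=
    Multiset.monotone_filter_right s fun a ha hpa => hpq a hpa ha
  calc Multiset.card (s.filter p) + Multiset.card (s.filter q)
      ≤ Multiset.card (s.filter p) + Multiset.card (s.filter (¬ p ·)) := by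
        gcongr
    _ = Multiset.card s := by rw [← Multiset.card_add, Multiset.filter_add_not]

section Inertia

open scoped ComplexOrder

variable {𝕜 ι κ κ' : Type*} [RCLike 𝕜] [Fintype ι] [DecidableEq ι]

theorem conjTranspose_mul_mul_eq_diagonal_eigenvalues {M : Matrix ι ι 𝕜} (hM : M.IsHermitian)
    (X : Matrix ι κ 𝕜) :
    Xᴴ * M * X = ((hM.eigenvectorUnitary : Matrix ι ι 𝕜)ᴴ * X)ᴴ *
      diagonal (fun i => (hM.eigenvalues i : 𝕜)) *
        ((hM.eigenvectorUnitary : Matrix ι ι 𝕜)ᴴ * X) := by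
  conv_lhs => rw [hM.spectral_theorem, Unitary.conjStarAlgAut_apply]
  simp only [conjTranspose_mul, conjTranspose_conjTranspose, star_eq_conjTranspose,
    Matrix.mul_assoc, Function.comp_def]

theorem card_filter_roots_charpoly {M : Matrix ι ι 𝕜} (hM : M.IsHermitian)
    (p : 𝕜 → Prop) [DecidablePred p] :
    Multiset.card (M.charpoly.roots.filter p) =
      Fintype.card {i // p (hM.eigenvalues i)} := by
  rw [hM.roots_charpoly_eq_eigenvalues, Multiset.filter_map, Multiset.card_map,
    Fintype.card_subtype]
  rfl

variable [Fintype κ]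

theorem re_star_dotProduct_conjTranspose_mul_diagonal_mul_mulVec
    (d : ι → ℝ) (Y : Matrix ι κ 𝕜) (x : κ → 𝕜) :
    RCLike.re (star x ⬝ᵥ ((Yᴴ * diagonal (fun i => (d i : 𝕜)) * Y) *ᵥ x)) =
      ∑ i, d i * ‖(Y *ᵥ x) i‖ ^ 2 := by
  rw [← mulVec_mulVec, ← mulVec_mulVec, dotProduct_mulVec, ← star_mulVec, dotProduct, map_sum]
  refine Finset.sum_congr rfl fun i _ => ?_
  rw [mulVec_diagonal, Pi.star_apply, mul_left_comm, RCLike.re_ofReal_mul,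
    RCLike.star_def, RCLike.conj_mul, ← RCLike.ofReal_pow, RCLike.ofReal_re]

theorem card_le_card_pos_of_posDef_conjTranspose_mul_diagonal_mul
    {d : ι → ℝ} {Y : Matrix ι κ 𝕜}
    (hY : (Yᴴ * diagonal (fun i => (d i : 𝕜)) * Y).PosDef) :
    Fintype.card κ ≤ Fintype.card {i // 0 < d i} := by
  let posRows : Matrix {i // 0 < d i} κ 𝕜 := Y.submatrix Subtype.val id
  have posRows_injective : Function.Injective posRows.mulVecLin := by
    rw [injective_iff_map_eq_zero]
    intro x hx
    by_contra hx₀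
    have hpos := hY.re_dotProduct_pos hx₀
    rw [re_star_dotProduct_conjTranspose_mul_diagonal_mul_mulVec] at hpos
    refine hpos.not_ge (Finset.sum_nonpos fun i _ => ?_)
    by_cases hi : 0 < d i
    · have hYx : (Y *ᵥ x) i = 0 := congrFun hx ⟨i, hi⟩
      rw [hYx, norm_zero, zero_pow two_ne_zero, mul_zero]
    · exact mul_nonpos_of_nonpos_of_nonneg (not_lt.mp hi) (sq_nonneg _)
  simpa using LinearMap.finrank_le_finrank_of_injective posRows_injective

theorem card_le_card_neg_of_posDef_neg_conjTranspose_mul_diagonal_mul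
    {d : ι → ℝ} {Y : Matrix ι κ 𝕜}
    (hY : (-(Yᴴ * diagonal (fun i => (d i : 𝕜)) * Y)).PosDef) :
    Fintype.card κ ≤ Fintype.card {i // d i < 0} := by
  have hneg : -(Yᴴ * diagonal (fun i => (d i : 𝕜)) * Y) =
      Yᴴ * diagonal (fun i => ((-d i : ℝ) : 𝕜)) * Y := by
    simp only [RCLike.ofReal_neg]
    rw [← Matrix.neg_mul, ← Matrix.mul_neg, diagonal_neg]
  rw [hneg] at hY
  simpa only [neg_pos] using card_le_card_pos_of_posDef_conjTranspose_mul_diagonal_mul hY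

variable [Fintype κ'] [DecidableLT 𝕜]

theorem card_le_card_pos_roots_charpoly {M : Matrix ι ι 𝕜} (hM : M.IsHermitian)
    {X : Matrix ι κ 𝕜} (hX : (Xᴴ * M * X).PosDef) :
    Fintype.card κ ≤ Multiset.card (M.charpoly.roots.filter fun x => 0 < x) := by
  rw [conjTranspose_mul_mul_eq_diagonal_eigenvalues hM] at hX
  simpa only [card_filter_roots_charpoly hM, RCLike.ofReal_pos] using
    card_le_card_pos_of_posDef_conjTranspose_mul_diagonal_mul hX

theorem card_le_card_neg_roots_charpoly {M : Matrix ι ι 𝕜} (hM : M.IsHermitian)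
    {X : Matrix ι κ 𝕜} (hX : (-(Xᴴ * M * X)).PosDef) :
    Fintype.card κ ≤ Multiset.card (M.charpoly.roots.filter fun x => x < 0) := by
  rw [conjTranspose_mul_mul_eq_diagonal_eigenvalues hM] at hX
  simpa only [card_filter_roots_charpoly hM, RCLike.ofReal_lt_zero] using
    card_le_card_neg_of_posDef_neg_conjTranspose_mul_diagonal_mul hX

theorem card_pos_and_card_neg_roots_charpoly_eq {M : Matrix ι ι 𝕜} (hM : M.IsHermitian)
    {X : Matrix ι κ 𝕜} (hX : (Xᴴ * M * X).PosDef)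
    {Y : Matrix ι κ' 𝕜} (hY : (-(Yᴴ * M * Y)).PosDef)
    (hcard : Fintype.card ι ≤ Fintype.card κ + Fintype.card κ') :
    Multiset.card (M.charpoly.roots.filter fun x => 0 < x) = Fintype.card κ ∧
      Multiset.card (M.charpoly.roots.filter fun x => x < 0) = Fintype.card κ' := by
  have hpos := card_le_card_pos_roots_charpoly hM hX
  have hneg := card_le_card_neg_roots_charpoly hM hY
  have hsum := card_filter_add_card_filter_le (p := (0 < ·)) (q := (· < 0))
    (fun _ : 𝕜 => lt_asymm) M.charpoly.roots
  have hroots : Multiset.card M.charpoly.roots ≤ Fintype.card ι :=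
    M.charpoly_natDegree_eq_dim ▸ M.charpoly.card_roots'
  omega

end Inertia

section SchurComplement

variable {R m n k : Type*} [Fintype m] [DecidableEq m] [Fintype n]

theorem conjTranspose_mul_fromBlocks_mul_fromRows_one_zero [Semiring R] [StarRing R]
    (A : Matrix m m R) (B : Matrix m n R) (C : Matrix n m R) (D : Matrix n n R) :
    (fromRows (1 : Matrix m m R) (0 : Matrix n m R))ᴴ * fromBlocks A B C D *
      fromRows (1 : Matrix m m R) (0 : Matrix n m R) = A := by
  rw [conjTranspose_fromRows_eq_fromCols_conjTranspose, fromCols_mul_fromBlocks,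
    fromCols_mul_fromRows]
  simp

variable [CommRing R] [DecidableEq n]

theorem fromBlocks_mul_fromRows_neg_inv_mul_one {A : Matrix m m R} (hA : IsUnit A)
    (B : Matrix m n R) (C : Matrix k m R) (D : Matrix k n R) :
    fromBlocks A B C D * fromRows (-(A⁻¹ * B)) (1 : Matrix n n R) =
      fromRows 0 (D - C * A⁻¹ * B) := by
  have hdet : IsUnit A.det := A.isUnit_iff_isUnit_det.mp hA
  rw [fromBlocks_mul_fromRows, Matrix.mul_neg, mul_nonsing_inv_cancel_left A B hdet,
    Matrix.mul_one, neg_add_cancel, Matrix.mul_neg, Matrix.mul_one, neg_add_eq_sub,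
    Matrix.mul_assoc]

theorem conjTranspose_mul_fromBlocks_mul_fromRows_neg_inv_mul_one [StarRing R]
    {A : Matrix m m R} (hA : IsUnit A)
    (B : Matrix m n R) (C : Matrix n m R) (D : Matrix n n R) :
    (fromRows (-(A⁻¹ * B)) (1 : Matrix n n R))ᴴ * fromBlocks A B C D *
      fromRows (-(A⁻¹ * B)) (1 : Matrix n n R) = D - C * A⁻¹ * B := by
  rw [Matrix.mul_assoc, fromBlocks_mul_fromRows_neg_inv_mul_one hA,
    conjTranspose_fromRows_eq_fromCols_conjTranspose, fromCols_mul_fromRows, Matrix.mul_zero,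
    zero_add, conjTranspose_one, Matrix.one_mul]

theorem isUnit_fromBlocks_of_isUnit_schur {A : Matrix m m R} (hA : IsUnit A)
    {B : Matrix m n R} {C : Matrix n m R} {D : Matrix n n R}
    (hS : IsUnit (D - C * A⁻¹ * B)) : IsUnit (fromBlocks A B C D) := by
  let := hA.invertible
  rwa [isUnit_fromBlocks_iff_of_invertible₁₁, invOf_eq_nonsing_inv]

end SchurComplement

section SaddlePoint

open scoped ComplexOrder

theorem stmt10_general {𝕜 m n : Type*} [RCLike 𝕜] [DecidableLT 𝕜]
    [Fintype m] [DecidableEq m] [Fintype n] [DecidableEq n]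
    {A : Matrix m m 𝕜} (hA : A.PosDef) {B : Matrix n m 𝕜} {C : Matrix n n 𝕜}
    (hS : (C + B * A⁻¹ * Bᴴ).PosDef) :
    IsUnit (fromBlocks A Bᴴ B (-C)).det ∧
    Multiset.card ((fromBlocks A Bᴴ B (-C)).charpoly.roots.filter fun x => 0 < x) =
      Fintype.card m ∧
    Multiset.card ((fromBlocks A Bᴴ B (-C)).charpoly.roots.filter fun x => x < 0) =
      Fintype.card n := by
  have hschur : -C - B * A⁻¹ * Bᴴ = -(C + B * A⁻¹ * Bᴴ) := by abel
  have hC : C.IsHermitian := by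
    simpa only [add_sub_cancel_right] using
      hS.isHermitian.sub (isHermitian_mul_mul_conjTranspose B hA.inv.isHermitian)
  have hM : (fromBlocks A Bᴴ B (-C)).IsHermitian :=
    hA.isHermitian.fromBlocks (conjTranspose_conjTranspose B) hC.neg
  constructor
  · rw [← isUnit_iff_isUnit_det]
    exact isUnit_fromBlocks_of_isUnit_schur hA.isUnit (hschur ▸ hS.isUnit.neg)
  · apply card_pos_and_card_neg_roots_charpoly_eq hM
      (X := fromRows (1 : Matrix m m 𝕜) 0) (Y := fromRows (-(A⁻¹ * Bᴴ)) (1 : Matrix n n 𝕜))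
    · rwa [conjTranspose_mul_fromBlocks_mul_fromRows_one_zero]
    · rwa [conjTranspose_mul_fromBlocks_mul_fromRows_neg_inv_mul_one hA.isUnit, hschur, neg_neg]
    · exact Fintype.card_sum.le

end SaddlePoint

/-- a symmetric saddle point matrix `[[A, Bᵀ],[B, −C]]` with `A` SPD and
`C + B A⁻¹ Bᵀ` SPD is nonsingular and has exactly `N` positive and `n` negative eigenvalues
(counted with multiplicity, as roots of the characteristic polynomial). -/
theorem stmt10
    (N n : ℕ)
    (A : Matrix (Fin N) (Fin N) ℝ) (hA : A.PosDef)
    (B : Matrix (Fin n) (Fin N) ℝ)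
    (Cm : Matrix (Fin n) (Fin n) ℝ) (hCm : Cm.IsSymm)
    (hSchur : (Cm + B * A⁻¹ * Bᵀ).PosDef) :
    IsUnit (fromBlocks A Bᵀ B (-Cm)).det ∧
    Multiset.card ((fromBlocks A Bᵀ B (-Cm)).charpoly.roots.filter fun x => 0 < x) = N ∧
    Multiset.card ((fromBlocks A Bᵀ B (-Cm)).charpoly.roots.filter fun x => x < 0) = n := by
  rw [← conjTranspose_eq_transpose_of_trivial] at hSchur ⊢
  simpa only [Fintype.card_fin] using stmt10_general hA hSchur
end

section
/- Let A be a real symmetric positive definite N×N matrix in block form A = [[A_DD, A_D0],[A_0D, A_00]] with A_DD of size n×n (N = n + n_0), and let B_D be a real symmetric positive semidefinite n×n matrix such that xᵀ B_D x ≤ (x,v)ᵀ A (x,v) for all x ∈ R^n and v ∈ R^{n_0}. Then, with S_00 = A_DD − A_D0 A_00^{−1} A_0D, one has the Loewner inequalities B_D ≼ S_00 and B_D S_00^{−1} B_D ≼ B_D; that is, S_0 := B_D S_00^{−1} B_D satisfies S_0 ≼ B_D. -/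
open Matrix

/-!
Write `S = A - B * D⁻¹ * C` for the Schur complement of `D` in `M = fromBlocks A B C D`.
At the vector `(x, -D⁻¹ C x)`, the minimizer over the second block when `M` is positive definite,
the quadratic form of `M` takes the value `xᴴ S x`. A lower bound `xᴴ P x` that is uniform in the
second block is therefore a lower bound for `S`, that is, `P ≼ S`. For `P` positive semidefinite,
the second inequality then follows from the identity
`P - P S⁻¹ P = (1 - S⁻¹ P)ᴴ P (1 - S⁻¹ P) + (S⁻¹ P)ᴴ (S - P) (S⁻¹ P)`,
whose right-hand side is a sum of congruences of positive semidefinite matrices.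
-/

section SchurComplement

variable {m n R : Type*} [Fintype m] [Fintype n] [DecidableEq n] [CommRing R]
  {A : Matrix m m R} {B : Matrix m n R} {C : Matrix n m R} {D : Matrix n n R}

lemma fromBlocks_mulVec_sumElim_neg_inv_mul_mulVec (hD : IsUnit D) (x : m → R) :
    fromBlocks A B C D *ᵥ Sum.elim x (-((D⁻¹ * C) *ᵥ x)) =
      Sum.elim ((A - B * D⁻¹ * C) *ᵥ x) 0 := by
  have hdet : IsUnit D.det := (isUnit_iff_isUnit_det D).1 hD
  have hfst : A *ᵥ x + B *ᵥ (-((D⁻¹ * C) *ᵥ x)) = (A - B * D⁻¹ * C) *ᵥ x := by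
    rw [mulVec_neg, mulVec_mulVec, ← Matrix.mul_assoc, sub_mulVec, sub_eq_add_neg]
  have hsnd : C *ᵥ x + D *ᵥ (-((D⁻¹ * C) *ᵥ x)) = 0 := by
    rw [mulVec_neg, mulVec_mulVec, mul_nonsing_inv_cancel_left D C hdet, add_neg_cancel]
  rw [fromBlocks_mulVec, Sum.elim_comp_inl, Sum.elim_comp_inr, hfst, hsnd]

lemma sumElim_dotProduct_fromBlocks_mulVec_eq_schurComplement (hD : IsUnit D)
    (y : m → R) (w : n → R) (x : m → R) :
    Sum.elim y w ⬝ᵥ fromBlocks A B C D *ᵥ Sum.elim x (-((D⁻¹ * C) *ᵥ x)) =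
      y ⬝ᵥ (A - B * D⁻¹ * C) *ᵥ x := by
  rw [fromBlocks_mulVec_sumElim_neg_inv_mul_mulVec hD, sumElim_dotProduct_sumElim,
    dotProduct_zero, add_zero]

lemma isUnit_schurComplement [DecidableEq m] (hM : IsUnit (fromBlocks A B C D)) (hD : IsUnit D) :
    IsUnit (A - B * D⁻¹ * C) := by
  have : Invertible D := hD.invertible
  rw [← invOf_eq_nonsing_inv]
  exact isUnit_fromBlocks_iff_of_invertible₂₂.1 hM

variable [StarRing R]

omit [Fintype m] in
lemma isHermitian_schurComplement (hM : (fromBlocks A B C D).IsHermitian) :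
    (A - B * D⁻¹ * C).IsHermitian := by
  obtain ⟨-, rfl, -, hD⟩ := isHermitian_fromBlocks_iff.1 hM
  exact (IsHermitian.fromBlocks₂₂ A B hD).1 hM

variable [PartialOrder R] [AddLeftMono R] {P : Matrix m m R}

lemma posSemidef_schurComplement_sub (hM : (fromBlocks A B C D).IsHermitian) (hD : IsUnit D)
    (hP : P.IsHermitian)
    (hPM : ∀ (x : m → R) (v : n → R),
      star x ⬝ᵥ P *ᵥ x ≤ star (Sum.elim x v) ⬝ᵥ fromBlocks A B C D *ᵥ Sum.elim x v) :
    (A - B * D⁻¹ * C - P).PosSemidef := by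
  refine .of_dotProduct_mulVec_nonneg ((isHermitian_schurComplement hM).sub hP) fun x => ?_
  have hx := hPM x (-((D⁻¹ * C) *ᵥ x))
  rw [Function.star_sumElim, sumElim_dotProduct_fromBlocks_mulVec_eq_schurComplement hD] at hx
  rwa [sub_mulVec, dotProduct_sub, sub_nonneg]

end SchurComplement

section Congruence

variable {n R : Type*} [Fintype n] [DecidableEq n] [CommRing R] {P S : Matrix n n R}

lemma sub_mul_inv_mul_eq_add_congruences (hS : IsUnit S) :
    P - P * S⁻¹ * P =
      (1 - P * S⁻¹) * P * (1 - S⁻¹ * P) + P * S⁻¹ * (S - P) * (S⁻¹ * P) := by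
  have hdet : IsUnit S.det := (isUnit_iff_isUnit_det S).1 hS
  have hcancel : P * S⁻¹ * S * (S⁻¹ * P) = P * S⁻¹ * P := by
    rw [nonsing_inv_mul_cancel_right S P hdet, Matrix.mul_assoc]
  rw [Matrix.mul_sub (P * S⁻¹), Matrix.sub_mul (P * S⁻¹ * S), hcancel]
  noncomm_ring

lemma posSemidef_sub_mul_inv_mul [StarRing R] [PartialOrder R] [AddLeftMono R]
    (hP : P.PosSemidef) (hS : IsUnit S) (hSP : (S - P).PosSemidef) :
    (P - P * S⁻¹ * P).PosSemidef := by
  have hSH : S.IsHermitian := by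
    simpa only [add_sub_cancel] using hP.isHermitian.add hSP.isHermitian
  have hadj : (S⁻¹ * P)ᴴ = P * S⁻¹ := by
    rw [conjTranspose_mul, hP.isHermitian.eq, hSH.inv.eq]
  have hadj_one_sub : (1 - S⁻¹ * P)ᴴ = 1 - P * S⁻¹ := by
    rw [conjTranspose_sub, conjTranspose_one, hadj]
  rw [sub_mul_inv_mul_eq_add_congruences hS, ← hadj_one_sub, ← hadj]
  exact (hP.conjTranspose_mul_mul_same _).add (hSP.conjTranspose_mul_mul_same _)

end Congruence

theorem stmt14_general {m n R : Type*} [Fintype m] [DecidableEq m] [Fintype n] [DecidableEq n]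
    [CommRing R] [StarRing R] [PartialOrder R] [AddLeftMono R]
    {A : Matrix m m R} {B : Matrix m n R} {C : Matrix n m R} {D : Matrix n n R}
    (hM : (fromBlocks A B C D).IsHermitian) (hM_unit : IsUnit (fromBlocks A B C D))
    (hD : IsUnit D) {P : Matrix m m R} (hP : P.PosSemidef)
    (hPM : ∀ (x : m → R) (v : n → R),
      star x ⬝ᵥ P *ᵥ x ≤ star (Sum.elim x v) ⬝ᵥ fromBlocks A B C D *ᵥ Sum.elim x v) :
    (A - B * D⁻¹ * C - P).PosSemidef ∧ (P - P * (A - B * D⁻¹ * C)⁻¹ * P).PosSemidef := by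
  have hSP := posSemidef_schurComplement_sub hM hD hP.isHermitian hPM
  exact ⟨hSP, posSemidef_sub_mul_inv_mul hP (isUnit_schurComplement hM_unit hD) hSP⟩

/-- if `xᵀ B_D x ≤ (x,v)ᵀ A (x,v)` for all `x, v`, then `B_D ≼ S_00` and
`S_0 := B_D S_00⁻¹ B_D ≼ B_D` in the Loewner order. -/
theorem stmt14
    (n n0 : ℕ)
    (ADD : Matrix (Fin n) (Fin n) ℝ) (AD0 : Matrix (Fin n) (Fin n0) ℝ)
    (A0D : Matrix (Fin n0) (Fin n) ℝ) (A00 : Matrix (Fin n0) (Fin n0) ℝ)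
    (hA : (fromBlocks ADD AD0 A0D A00).PosDef)
    (BD : Matrix (Fin n) (Fin n) ℝ) (hBD : BD.PosSemidef)
    (hquad : ∀ (x : Fin n → ℝ) (v : Fin n0 → ℝ),
      x ⬝ᵥ BD.mulVec x ≤
        Sum.elim x v ⬝ᵥ (fromBlocks ADD AD0 A0D A00).mulVec (Sum.elim x v)) :
    ((ADD - AD0 * A00⁻¹ * A0D) - BD).PosSemidef ∧
    (BD - BD * (ADD - AD0 * A00⁻¹ * A0D)⁻¹ * BD).PosSemidef := by
  exact stmt14_general hA.isHermitian hA.isUnit (hA.submatrix Sum.inr_injective).isUnit hBD hquad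
end

section
/- Let 𝒜 be a real symmetric k×k matrix and let G_0, G be real symmetric positive definite k×k matrices with α_min·G_0 ≼ G ≼ α_max·G_0 for constants α_max ≥ α_min > 0. Suppose there are real numbers m_1 ≤ m_2 < 0 < m_3 ≤ m_4 such that every eigenvalue μ of the pencil (𝒜, G_0) (i.e., every μ with 𝒜x = μ G_0 x for some x ≠ 0) lies in [m_1, m_2] ∪ [m_3, m_4]. Then every eigenvalue of the pencil (𝒜, G) lies in [m_1/α_min, m_2/α_max] ∪ [m_3/α_max, m_4/α_min]. -/
open Matrix

/-!
Let `𝒜 x = μ G x` with `x ≠ 0`, and write `q_M` for the value at `x` of the quadratic form of `M`,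
so that `q_𝒜 = μ q_G`. Simultaneous diagonalization turns a quadratic inequality
`0 ≤ α + β ν + γ ν²`, valid at every eigenvalue `ν` of `(𝒜, G₀)`, into the Loewner inequality
`0 ≼ α G₀ + β 𝒜 + γ 𝒜 G₀⁻¹ 𝒜`.

* If `μ ν ≤ c` for all `ν`, then `μ 𝒜 ≼ c G₀`, so `μ² α_min q_{G₀} ≤ μ² q_G = μ q_𝒜 ≤ c q_{G₀}`.
* If `m ν ≤ ν²` for all `ν`, then `m 𝒜 ≼ 𝒜 G₀⁻¹ 𝒜`. The eigenvalues of `(G, G₀)` lie in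
  `[0, α_max]`, whence also `G G₀⁻¹ G ≼ α_max G`. As `𝒜 x = μ G x`, the form of `𝒜 G₀⁻¹ 𝒜` at `x`
  is `μ²` times that of `G G₀⁻¹ G`, so `m μ q_G ≤ μ² α_max q_G`.

The first implication, with `c = μ m₄` or `c = μ m₁`, gives the outer endpoints; the second, with
`m = m₃` or `m = m₂`, gives the inner ones.
-/

section HermitianPencil

open Set
open scoped ComplexOrder MatrixOrder

variable {n 𝕜 : Type*} [RCLike 𝕜] {A B G G₀ P : Matrix n n 𝕜} {x : n → 𝕜}
  {a b c m μ : ℝ}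

theorem posDef_of_smul_le (hG₀ : G₀.PosDef) (ha : 0 < a) (h : a • G₀ ≤ G) : G.PosDef := by
  have h_sum := (hG₀.smul ha).add_posSemidef (le_iff.1 h)
  rwa [add_sub_cancel] at h_sum

theorem pos_of_posDef_of_le_smul [Nonempty n] (hG₀ : G₀.PosDef) (hG : G.PosDef)
    (hb : G ≤ b • G₀) : 0 < b := by
  obtain ⟨i⟩ := ‹Nonempty n›
  have h_diag : G i i ≤ b • G₀ i i := sub_nonneg.1 (le_iff.1 hb).diag_nonneg
  exact (smul_pos_iff_of_pos_right hG₀.diag_pos).1 (hG.diag_pos.trans_le h_diag)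

variable [Fintype n]

/-- The set of real eigenvalues of the pencil `(A, G)`. When `A` is Hermitian and `G` is positive
definite, all eigenvalues of the pencil are real. -/
def pencilSpectrum (A G : Matrix n n 𝕜) : Set ℝ :=
  {μ | ∃ x : n → 𝕜, x ≠ 0 ∧ A *ᵥ x = μ • G *ᵥ x}

/-- The quadratic form `x ↦ xᴴ A x` of a Hermitian matrix `A`, encoded as a real number by taking
the real part. -/
def hermitianForm (A : Matrix n n 𝕜) (x : n → 𝕜) : ℝ :=
  RCLike.re (star x ⬝ᵥ A *ᵥ x)

theorem hermitianForm_smul (c : ℝ) (A : Matrix n n 𝕜) (x : n → 𝕜) :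
    hermitianForm (c • A) x = c * hermitianForm A x := by
  rw [hermitianForm, smul_mulVec, dotProduct_smul, RCLike.smul_re, hermitianForm]

theorem hermitianForm_smul_right (c : ℝ) (A : Matrix n n 𝕜) (x : n → 𝕜) :
    hermitianForm A (c • x) = c ^ 2 * hermitianForm A x := by
  rw [hermitianForm, star_smul, star_trivial, mulVec_smul, smul_dotProduct, dotProduct_smul,
    RCLike.smul_re, RCLike.smul_re, ← mul_assoc, ← sq, hermitianForm]

theorem hermitianForm_conjTranspose_mul_mul_same (A P : Matrix n n 𝕜) (x : n → 𝕜) :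
    hermitianForm (Pᴴ * A * P) x = hermitianForm A (P *ᵥ x) := by
  rw [hermitianForm, hermitianForm, star_mulVec, ← dotProduct_mulVec, mulVec_mulVec, mulVec_mulVec,
    mul_assoc]

theorem hermitianForm_mono (h : A ≤ B) (x : n → 𝕜) : hermitianForm A x ≤ hermitianForm B x := by
  have h_nonneg := (le_iff.1 h).re_dotProduct_nonneg x
  rwa [sub_mulVec, dotProduct_sub, map_sub, sub_nonneg] at h_nonneg

theorem hermitianForm_pos (hG : G.PosDef) (hx : x ≠ 0) : 0 < hermitianForm G x :=
  hG.re_dotProduct_pos hx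

theorem hermitianForm_eq_mul_of_mulVec_eq (h : A *ᵥ x = μ • G *ᵥ x) :
    hermitianForm A x = μ * hermitianForm G x := by
  rw [hermitianForm, h, dotProduct_smul, RCLike.smul_re, hermitianForm]

theorem hermitianForm_mul_inv_mul_of_mulVec_eq (hA : A.IsHermitian) (hG : G.IsHermitian)
    (h : A *ᵥ x = μ • G *ᵥ x) (M : Matrix n n 𝕜) :
    hermitianForm (A * M * A) x = μ ^ 2 * hermitianForm (G * M * G) x := by
  have hA_form := hermitianForm_conjTranspose_mul_mul_same M A x
  have hG_form := hermitianForm_conjTranspose_mul_mul_same M G x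
  rw [hA.eq] at hA_form
  rw [hG.eq] at hG_form
  rw [hA_form, hG_form, h, hermitianForm_smul_right]

theorem zero_mem_pencilSpectrum_iff : 0 ∈ pencilSpectrum A G ↔ ∃ x : n → 𝕜, x ≠ 0 ∧ A *ᵥ x = 0 := by
  simp only [pencilSpectrum, mem_ofPred_eq, zero_smul]

theorem pencilSpectrum_subset_Icc (hG₀ : G₀.PosDef) (ha : a • G₀ ≤ G) (hb : G ≤ b • G₀) :
    pencilSpectrum G G₀ ⊆ Icc a b := by
  rintro ν ⟨x, hx, hGx⟩
  have h_pos := hermitianForm_pos hG₀ hx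
  have h_form := hermitianForm_eq_mul_of_mulVec_eq hGx
  have h_lower := hermitianForm_mono ha x
  have h_upper := hermitianForm_mono hb x
  rw [hermitianForm_smul, h_form] at h_lower h_upper
  exact ⟨le_of_mul_le_mul_right h_lower h_pos, le_of_mul_le_mul_right h_upper h_pos⟩

section Diagonalization

variable [DecidableEq n]

theorem exists_conjTranspose_mul_mul_eq_one (hG : G.PosDef) :
    ∃ P : Matrix n n 𝕜, Pᴴ * G * P = 1 := by
  obtain ⟨L, hL, rfl⟩ :=
    CStarAlgebra.isStrictlyPositive_iff_eq_star_mul_self.1 hG.isStrictlyPositive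
  have h_inv : L * L⁻¹ = 1 := mul_nonsing_inv L ((isUnit_iff_isUnit_det L).1 hL)
  refine ⟨L⁻¹, ?_⟩
  rw [star_eq_conjTranspose, mul_assoc, mul_assoc, h_inv, mul_one, ← conjTranspose_mul, h_inv,
    conjTranspose_one]

theorem exists_simultaneous_diagonalization (hA : A.IsHermitian) (hG : G.PosDef) :
    ∃ (P : Matrix n n 𝕜) (d : n → ℝ),
      Pᴴ * G * P = 1 ∧ Pᴴ * A * P = diagonal fun i ↦ (d i : 𝕜) := by
  obtain ⟨Q, hQ⟩ := exists_conjTranspose_mul_mul_eq_one hG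
  have hQA : (Qᴴ * A * Q).IsHermitian := isHermitian_conjTranspose_mul_mul Q hA
  let U : Matrix n n 𝕜 := hQA.eigenvectorUnitary
  have h_unitary : Uᴴ * U = 1 := Unitary.coe_star_mul_self hQA.eigenvectorUnitary
  have h_diag : Uᴴ * (Qᴴ * A * Q) * U = diagonal fun i ↦ (hQA.eigenvalues i : 𝕜) := by
    have := hQA.conjStarAlgAut_star_eigenvectorUnitary
    rwa [Unitary.conjStarAlgAut_star_apply] at this
  have h_congr (M : Matrix n n 𝕜) : (Q * U)ᴴ * M * (Q * U) = Uᴴ * (Qᴴ * M * Q) * U := by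
    simp only [conjTranspose_mul, mul_assoc]
  refine ⟨Q * U, hQA.eigenvalues, ?_, ?_⟩
  · rw [h_congr, hQ, mul_one, h_unitary]
  · rw [h_congr, h_diag]

theorem isUnit_of_conjTranspose_mul_mul_eq_one (hP : Pᴴ * G * P = 1) : IsUnit P :=
  .of_mul_eq_one_right _ hP

theorem inv_eq_mul_conjTranspose (hP : Pᴴ * G * P = 1) : G⁻¹ = P * Pᴴ := by
  refine inv_eq_right_inv ?_
  rw [← mul_assoc]
  exact mul_eq_one_comm.1 (by rwa [← mul_assoc])

theorem mem_pencilSpectrum_of_diagonal {d : n → ℝ} (hP : Pᴴ * G * P = 1)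
    (hd : Pᴴ * A * P = diagonal fun i ↦ (d i : 𝕜)) (i : n) : d i ∈ pencilSpectrum A G := by
  have hP_unit := isUnit_of_conjTranspose_mul_mul_eq_one hP
  have h_inj := mulVec_injective_of_isUnit hP_unit
  refine ⟨P *ᵥ Pi.single i 1, ?_, ?_⟩
  · rw [← mulVec_zero P]
    exact h_inj.ne (Pi.single_ne_zero_iff.2 one_ne_zero)
  · refine mulVec_injective_of_isUnit hP_unit.star ?_
    rw [star_eq_conjTranspose, mulVec_smul, mulVec_mulVec, mulVec_mulVec, mulVec_mulVec,
      mulVec_mulVec, hP, hd, diagonal_mulVec_single, one_mulVec, ← Pi.single_smul, mul_one,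
      RCLike.real_smul_eq_coe_mul, mul_one]

theorem quadratic_nonneg_of_forall_pencilSpectrum (hA : A.IsHermitian) (hG : G.PosDef)
    {α β γ : ℝ} (h : ∀ ν ∈ pencilSpectrum A G, 0 ≤ α + β * ν + γ * ν ^ 2) :
    0 ≤ α • G + β • A + γ • (A * G⁻¹ * A) := by
  obtain ⟨P, d, hP, hd⟩ := exists_simultaneous_diagonalization hA hG
  have h_sq : Pᴴ * (A * G⁻¹ * A) * P = (diagonal fun i ↦ (d i : 𝕜)) ^ 2 := by
    rw [inv_eq_mul_conjTranspose hP, ← hd, sq]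
    simp only [mul_assoc]
  have h_diag : Pᴴ * (α • G + β • A + γ • (A * G⁻¹ * A)) * P =
      diagonal fun i ↦ ((α + β * d i + γ * d i ^ 2 : ℝ) : 𝕜) := by
    simp only [mul_add, add_mul, Matrix.mul_smul, Matrix.smul_mul, hP, hd, h_sq, diagonal_pow]
    ext i j
    by_cases hij : i = j
    · subst hij
      simp [RCLike.real_smul_eq_coe_mul]
    · simp [hij]
  rw [nonneg_iff_posSemidef,
    ← (isUnit_of_conjTranspose_mul_mul_eq_one hP).posSemidef_star_left_conjugate_iff,
    star_eq_conjTranspose, h_diag, posSemidef_diagonal_iff]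
  exact fun i ↦ RCLike.ofReal_nonneg.2 (h _ (mem_pencilSpectrum_of_diagonal hP hd i))

theorem smul_le_mul_inv_mul_of_forall_pencilSpectrum (hA : A.IsHermitian) (hG : G.PosDef)
    (h : ∀ ν ∈ pencilSpectrum A G, m * ν ≤ ν ^ 2) : m • A ≤ A * G⁻¹ * A := by
  have h_nonneg := quadratic_nonneg_of_forall_pencilSpectrum hA hG (α := 0) (β := -m) (γ := 1)
    fun ν hν ↦ by linarith [h ν hν]
  rwa [zero_smul, zero_add, one_smul, neg_smul, neg_add_eq_sub, sub_nonneg] at h_nonneg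

theorem mul_inv_mul_le_smul (hG₀ : G₀.PosDef) (hG : G.PosSemidef) (hb : G ≤ b • G₀) :
    G * G₀⁻¹ * G ≤ b • G := by
  have h_nonneg := quadratic_nonneg_of_forall_pencilSpectrum hG.isHermitian hG₀
    (α := 0) (β := b) (γ := -1) fun ν hν ↦ by
      have hν : ν ∈ Icc 0 b :=
        pencilSpectrum_subset_Icc hG₀ ((zero_smul ℝ G₀).trans_le hG.nonneg) hb hν
      nlinarith [mul_nonneg hν.1 (sub_nonneg.2 hν.2)]
  rwa [zero_smul, zero_add, neg_one_smul, ← sub_eq_add_neg, sub_nonneg] at h_nonneg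

end Diagonalization

theorem smul_le_smul_of_forall_pencilSpectrum (hA : A.IsHermitian) (hG : G.PosDef)
    (h : ∀ ν ∈ pencilSpectrum A G, m * ν ≤ c) : m • A ≤ c • G := by
  classical
  have h_nonneg := quadratic_nonneg_of_forall_pencilSpectrum hA hG (α := c) (β := -m) (γ := 0)
    fun ν hν ↦ by linarith [h ν hν]
  rwa [zero_smul, add_zero, neg_smul, ← sub_eq_add_neg, sub_nonneg] at h_nonneg

theorem mul_sq_le_of_mem_pencilSpectrum (hA : A.IsHermitian) (hG₀ : G₀.PosDef)
    (ha : a • G₀ ≤ G) (h : ∀ ν ∈ pencilSpectrum A G₀, μ * ν ≤ c)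
    (hμ : μ ∈ pencilSpectrum A G) : a * μ ^ 2 ≤ c := by
  obtain ⟨x, hx, hAx⟩ := hμ
  have h_lower := hermitianForm_mono ha x
  have h_upper := hermitianForm_mono (smul_le_smul_of_forall_pencilSpectrum hA hG₀ h) x
  rw [hermitianForm_smul] at h_lower
  rw [hermitianForm_smul, hermitianForm_smul, hermitianForm_eq_mul_of_mulVec_eq hAx] at h_upper
  refine le_of_mul_le_mul_right ?_ (hermitianForm_pos hG₀ hx)
  calc a * μ ^ 2 * hermitianForm G₀ x
      = μ ^ 2 * (a * hermitianForm G₀ x) := by ring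
    _ ≤ μ ^ 2 * hermitianForm G x := by gcongr
    _ = μ * (μ * hermitianForm G x) := by ring
    _ ≤ c * hermitianForm G₀ x := h_upper

theorem mul_le_mul_sq_of_mem_pencilSpectrum (hA : A.IsHermitian) (hG₀ : G₀.PosDef)
    (hG : G.PosDef) (hb : G ≤ b • G₀) (h : ∀ ν ∈ pencilSpectrum A G₀, m * ν ≤ ν ^ 2)
    (hμ : μ ∈ pencilSpectrum A G) : m * μ ≤ b * μ ^ 2 := by
  classical
  obtain ⟨x, hx, hAx⟩ := hμ
  refine le_of_mul_le_mul_right ?_ (hermitianForm_pos hG hx)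
  calc m * μ * hermitianForm G x
      = hermitianForm (m • A) x := by
        rw [hermitianForm_smul, hermitianForm_eq_mul_of_mulVec_eq hAx, mul_assoc]
    _ ≤ hermitianForm (A * G₀⁻¹ * A) x :=
        hermitianForm_mono (smul_le_mul_inv_mul_of_forall_pencilSpectrum hA hG₀ h) x
    _ = μ ^ 2 * hermitianForm (G * G₀⁻¹ * G) x :=
        hermitianForm_mul_inv_mul_of_mulVec_eq hA hG.isHermitian hAx _
    _ ≤ μ ^ 2 * hermitianForm (b • G) x := by
        gcongr
        exact hermitianForm_mono (mul_inv_mul_le_smul hG₀ hG.posSemidef hb) x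
    _ = b * μ ^ 2 * hermitianForm G x := by rw [hermitianForm_smul]; ring

theorem stmt17_general {αmin αmax m₁ m₂ m₃ m₄ : ℝ} (hA : A.IsHermitian) (hG₀ : G₀.PosDef)
    (hαmin : 0 < αmin) (hmin : αmin • G₀ ≤ G) (hmax : G ≤ αmax • G₀)
    (h12 : m₁ ≤ m₂) (h2 : m₂ < 0) (h3 : 0 < m₃) (h34 : m₃ ≤ m₄)
    (hloc : pencilSpectrum A G₀ ⊆ Icc m₁ m₂ ∪ Icc m₃ m₄) :
    pencilSpectrum A G ⊆ Icc (m₁ / αmin) (m₂ / αmax) ∪ Icc (m₃ / αmax) (m₄ / αmin) := by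
  intro μ hμ
  have hG : G.PosDef := posDef_of_smul_le hG₀ hαmin hmin
  have : Nonempty n := hμ.elim fun _ hx ↦ (Function.ne_iff.1 hx.1).nonempty
  have hαmax : 0 < αmax := pos_of_posDef_of_le_smul hG₀ hG hmax
  have h_outer {m : ℝ} (h : ∀ ν ∈ pencilSpectrum A G₀, μ * ν ≤ μ * m) : αmin * μ ^ 2 ≤ μ * m :=
    mul_sq_le_of_mem_pencilSpectrum hA hG₀ hmin h hμ
  have h_inner {m : ℝ} (h : ∀ ν ∈ pencilSpectrum A G₀, m * ν ≤ ν ^ 2) : m * μ ≤ αmax * μ ^ 2 :=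
    mul_le_mul_sq_of_mem_pencilSpectrum hA hG₀ hG hmax h hμ
  rcases lt_trichotomy μ 0 with hμ_neg | rfl | hμ_pos
  · have h₁ := h_outer (m := m₁) fun ν hν ↦ by rcases hloc hν with ⟨_, _⟩ | ⟨_, _⟩ <;> nlinarith
    have h₂ := h_inner (m := m₂) fun ν hν ↦ by rcases hloc hν with ⟨_, _⟩ | ⟨_, _⟩ <;> nlinarith
    exact .inl ⟨(div_le_iff₀ hαmin).2 (by nlinarith), (le_div_iff₀ hαmax).2 (by nlinarith)⟩
  · have h_zero := hloc (zero_mem_pencilSpectrum_iff.2 (zero_mem_pencilSpectrum_iff.1 hμ))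
    rcases h_zero with ⟨_, h⟩ | ⟨h, _⟩ <;> linarith
  · have h₃ := h_inner (m := m₃) fun ν hν ↦ by rcases hloc hν with ⟨_, _⟩ | ⟨_, _⟩ <;> nlinarith
    have h₄ := h_outer (m := m₄) fun ν hν ↦ by rcases hloc hν with ⟨_, _⟩ | ⟨_, _⟩ <;> nlinarith
    exact .inr ⟨(div_le_iff₀ hαmax).2 (by nlinarith), (le_div_iff₀ hαmin).2 (by nlinarith)⟩

end HermitianPencil

/-- if `α_min·G₀ ≼ G ≼ α_max·G₀` and every eigenvalue of the pencil `(𝒜, G₀)`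
lies in `[m₁, m₂] ∪ [m₃, m₄]` with `m₁ ≤ m₂ < 0 < m₃ ≤ m₄`, then every eigenvalue of the
pencil `(𝒜, G)` lies in `[m₁/α_min, m₂/α_max] ∪ [m₃/α_max, m₄/α_min]`. -/
theorem stmt17
    (k : ℕ) (𝒜 G₀ G : Matrix (Fin k) (Fin k) ℝ)
    (h𝒜 : 𝒜.IsSymm) (hG₀ : G₀.PosDef) (hG : G.PosDef)
    (αmin αmax : ℝ) (hαmin : 0 < αmin) (hα : αmin ≤ αmax)
    (hL1 : (G - αmin • G₀).PosSemidef) (hL2 : (αmax • G₀ - G).PosSemidef)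
    (m₁ m₂ m₃ m₄ : ℝ) (h12 : m₁ ≤ m₂) (h2 : m₂ < 0) (h3 : 0 < m₃) (h34 : m₃ ≤ m₄)
    (hloc : ∀ (μ : ℝ) (x : Fin k → ℝ), x ≠ 0 → 𝒜.mulVec x = μ • G₀.mulVec x →
      (m₁ ≤ μ ∧ μ ≤ m₂) ∨ (m₃ ≤ μ ∧ μ ≤ m₄)) :
    ∀ (μ : ℝ) (x : Fin k → ℝ), x ≠ 0 → 𝒜.mulVec x = μ • G.mulVec x →
      (m₁ / αmin ≤ μ ∧ μ ≤ m₂ / αmax) ∨ (m₃ / αmax ≤ μ ∧ μ ≤ m₄ / αmin) := by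
  intro μ x hx hAx
  have h𝒜_hermitian : 𝒜.IsHermitian := (conjTranspose_eq_transpose_of_trivial 𝒜).trans h𝒜
  exact stmt17_general h𝒜_hermitian hG₀ hαmin hL1 hL2 h12 h2 h3 h34
    (fun ν ⟨y, hy, hAy⟩ ↦ hloc ν y hy hAy) ⟨x, hx, hAx⟩
end
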